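/- arXiv:2408.10534 — 3 statements merged into one kernel-verified Lean document; each statement's English description precedes it below -/
import Mathlib

section
/- Let p ≠ r be primes. The Haar-measure proportion of monic degree-r polynomials in Z_p[x] that are irreducible equals ((p^r - p)(1 - p^{-(r+1)/2}) + r(p-1)(1 - p^{-(r+1)(r-1)/2})) / (r p^r (1 - p^{-r(r+1)/2 + 1})(1 - p^{-(r+1)/2})). -/
open MeasureTheory Polynomial

noncomputable instance (p : ℕ) [Fact p.Prime] : MeasurableSpace ℤ_[p] := borel _
instance (p : ℕ) [Fact p.Prime] : BorelSpace ℤ_[p] := ⟨rfl⟩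

section Padic
variable {p : ℕ} [Fact p.Prime]

/-- The Newton polygon of a monic irreducible polynomial over `ℤ_p` is a single segment. -/
theorem norm_coeff_pow_le_of_irreducible {f : ℤ_[p][X]} (hm : f.Monic) (hf : Irreducible f)
    (i : ℕ) (hi : i ≤ f.natDegree) :
    ‖f.coeff i‖ ^ f.natDegree ≤ ‖f.coeff 0‖ ^ (f.natDegree - i) := by
  have hF : Irreducible (f.map (algebraMap ℤ_[p] ℚ_[p])) :=
    hm.irreducible_iff_irreducible_map_fraction_map.1 hf
  set F := f.map (algebraMap ℤ_[p] ℚ_[p]) with hFdef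
  have hFm : F.Monic := hm.map _
  have hdeg : F.natDegree = f.natDegree := hm.natDegree_map _
  have : Fact (Irreducible F) := ⟨hF⟩
  have : FiniteDimensional ℚ_[p] (AdjoinRoot F) := hFm.finite_adjoinRoot
  have hmin : minpoly ℚ_[p] (AdjoinRoot.root F) = F := by
    rw [AdjoinRoot.minpoly_root hF.ne_zero, hFm.leadingCoeff]; simp
  have hn : 0 < f.natDegree := hdeg ▸ hF.natDegree_pos
  have h1 := spectralNorm.spectralNorm_eq_norm_coeff_zero_rpow ℚ_[p] (AdjoinRoot F)
    (AdjoinRoot.root F)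
  have hc : ∀ j, ‖F.coeff j‖ = ‖f.coeff j‖ := fun j => by
    rw [hFdef, coeff_map]; rfl
  rcases hi.eq_or_lt with rfl | hi
  · simp [hm.coeff_natDegree]
  have h2 : spectralValueTerms F i ≤ spectralValue F :=
    le_ciSup (spectralValueTerms_bddAbove F) i
  rw [spectralNorm, hmin] at h1
  rw [h1, spectralValueTerms_of_lt_natDegree _ (hdeg ▸ hi), hc, hc, hdeg] at h2
  have hn' : (0 : ℝ) < f.natDegree := by exact_mod_cast hn
  have hni : (0 : ℝ) < f.natDegree - i := by
    have : (i : ℝ) < f.natDegree := by exact_mod_cast hi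
    linarith
  have h3 := Real.rpow_le_rpow (Real.rpow_nonneg (norm_nonneg _) _) h2
    (z := f.natDegree * (f.natDegree - i)) (by positivity)
  rw [← Real.rpow_mul (norm_nonneg _), ← Real.rpow_mul (norm_nonneg _)] at h3
  rw [← Real.rpow_natCast, ← Real.rpow_natCast, Nat.cast_sub hi.le]
  convert h3 using 2 <;> field_simp

theorem norm_lt_one_iff_toZMod_eq_zero (x : ℤ_[p]) : ‖x‖ < 1 ↔ PadicInt.toZMod x = 0 := by
  rw [← RingHom.mem_ker, PadicInt.ker_toZMod, PadicInt.maximalIdeal_eq_span_p,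
    PadicInt.norm_lt_one_iff_dvd, Ideal.mem_span_singleton]

/-- The reduction of a monic irreducible polynomial over `ℤ_p` has a single irreducible factor. -/
theorem map_toZMod_dvd_pow {f : ℤ_[p][X]} (hm : f.Monic) (hf : Irreducible f)
    {g : (ZMod p)[X]} (hg : Irreducible g) (hgf : g ∣ f.map PadicInt.toZMod) :
    ∃ e : ℕ, f.map PadicInt.toZMod ∣ g ^ e := by
  obtain ⟨G, rfl⟩ := Polynomial.map_surjective (PadicInt.toZMod (p := p))
    (ZMod.ringHom_surjective _) g
  have : IsDomain (AdjoinRoot f) := AdjoinRoot.isDomain_of_prime hf.prime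
  have : Module.Finite ℤ_[p] (AdjoinRoot f) := hm.finite_adjoinRoot
  have : FaithfulSMul ℤ_[p] (AdjoinRoot f) := by
    rw [faithfulSMul_iff_algebraMap_injective]
    refine AdjoinRoot.of.injective_of_degree_ne_zero fun h => hf.not_isUnit ?_
    rw [hm.degree_le_zero_iff_eq_one.1 h.le]
    exact isUnit_one
  set y := AdjoinRoot.mk f G with hy
  have h_int : IsIntegral ℤ_[p] y := Algebra.IsIntegral.isIntegral y
  set M := minpoly ℤ_[p] y with hM
  have hMm : M.Monic := minpoly.monic h_int
  have hMi : Irreducible M := minpoly.irreducible h_int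
  have hMy : f ∣ M.comp G := by
    have : aeval y M = 0 := minpoly.aeval _ _
    rw [← AdjoinRoot.mk_eq_zero, ← this, hy, ← AdjoinRoot.aeval_eq, ← AdjoinRoot.aeval_eq,
      aeval_comp]
  have hM0 : PadicInt.toZMod (M.coeff 0) = 0 := by
    by_contra h
    have h1 : G.map PadicInt.toZMod ∣ (M.map PadicInt.toZMod).comp (G.map PadicInt.toZMod) := by
      rw [← Polynomial.map_comp]
      exact hgf.trans (Polynomial.map_dvd _ hMy)
    rw [← divX_mul_X_add (M.map PadicInt.toZMod)] at h1
    simp only [add_comp, mul_comp, X_comp, C_comp, coeff_map] at h1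
    rw [dvd_add_right (Dvd.intro_left _ rfl)] at h1
    exact hg.not_isUnit (isUnit_of_dvd_unit h1 (isUnit_C.2 (Ne.isUnit h)))
  refine ⟨M.natDegree, ?_⟩
  have hMX : M.map PadicInt.toZMod = X ^ M.natDegree := by
    ext i
    rw [coeff_map, coeff_X_pow]
    rcases lt_trichotomy i M.natDegree with hi | hi | hi
    · rw [if_neg hi.ne, ← norm_lt_one_iff_toZMod_eq_zero]
      have := norm_coeff_pow_le_of_irreducible hMm hMi i hi.le
      have h0 := (norm_lt_one_iff_toZMod_eq_zero _).2 hM0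
      have h2 := this.trans_lt (pow_lt_one₀ (norm_nonneg _) h0 (by omega))
      by_contra h3
      exact absurd h2 (not_lt.2 (one_le_pow₀ (not_lt.1 h3)))
    · rw [if_pos hi, hi, hMm.coeff_natDegree, map_one]
    · rw [if_neg hi.ne', coeff_eq_zero_of_natDegree_lt hi, map_zero]
  have := Polynomial.map_dvd (PadicInt.toZMod (p := p)) hMy
  rwa [Polynomial.map_comp, hMX, X_pow_comp] at this

/-- The reduction of a monic irreducible polynomial of prime degree is either irreducible or a
power of a linear polynomial. -/
theorem irreducible_map_toZMod_or_eq_pow {f : ℤ_[p][X]} (hm : f.Monic) (hf : Irreducible f)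
    (hr : f.natDegree.Prime) :
    Irreducible (f.map PadicInt.toZMod) ∨
      ∃ a : ZMod p, f.map PadicInt.toZMod = (X - C a) ^ f.natDegree := by
  have hm' : (f.map (PadicInt.toZMod (p := p))).Monic := hm.map _
  have hd' : (f.map (PadicInt.toZMod (p := p))).natDegree = f.natDegree := hm.natDegree_map _
  obtain ⟨g, hgm, hg, hgf⟩ := exists_monic_irreducible_factor (f.map (PadicInt.toZMod (p := p)))
    (not_isUnit_of_natDegree_pos _ (hd' ▸ hr.pos))
  obtain ⟨e, he⟩ := map_toZMod_dvd_pow hm hf hg hgf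
  obtain ⟨k, -, hk⟩ := (dvd_prime_pow hg.prime _).1 he
  have hk := eq_of_monic_of_associated hm' (hgm.pow k) hk
  have hdk : f.natDegree = k * g.natDegree := by rw [← hd', hk, natDegree_pow]
  rcases (Nat.prime_mul_iff.1 (hdk ▸ hr)) with ⟨_, h1⟩ | ⟨_, h1⟩
  · right
    obtain ⟨a, ha⟩ : ∃ a, g = X - C a := ⟨-g.coeff 0, by
      conv_lhs => rw [hgm.eq_X_add_C h1]
      simp⟩
    exact ⟨a, by rw [hk, hdk, h1, ha, mul_one]⟩
  · left; rw [hk, h1, pow_one]; exact hg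

/-- **Dumas criterion**: a monic polynomial whose Newton polygon is a single segment of slope
`-k / r`, with `k` prime to the degree `r`, is irreducible. -/
theorem irreducible_of_norm_coeff_zero {f : ℤ_[p][X]} (hm : f.Monic) {k : ℕ}
    (hk : f.natDegree.Coprime k) (hr : 1 < f.natDegree)
    (h0 : ‖f.coeff 0‖ = (p : ℝ) ^ (-(k : ℤ)))
    (h : ∀ i ≤ f.natDegree,
      ‖f.coeff i‖ ^ f.natDegree ≤ ((p : ℝ) ^ (-(k : ℤ))) ^ (f.natDegree - i)) :
    Irreducible f := by
  have hp : (1 : ℝ) < p := by exact_mod_cast (Fact.out : p.Prime).one_lt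
  set r := f.natDegree with hrdef
  set s : ℝ := (p : ℝ) ^ (-(k : ℤ)) with hs
  have hspos : 0 < s := by positivity
  set c : ℝ := s ^ ((r : ℝ)⁻¹) with hc
  have hcpos : 0 < c := by positivity
  have hcr : c ^ r = s := Real.rpow_inv_natCast_pow hspos.le (by omega)
  let v : AbsoluteValue ℤ_[p] ℝ := NormedField.toAbsoluteValue ℚ_[p] |>.comp
    (f := algebraMap ℤ_[p] ℚ_[p]) (IsFractionRing.injective _ _)
  have hv : ∀ x, v x = ‖x‖ := fun x => rfl
  have hna : IsNonarchimedean v := fun x y => by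
    simp only [hv]; exact PadicInt.nonarchimedean x y
  have hf1 : f ≠ 1 := by rintro rfl; simp at hrdef; omega
  refine hm.irreducible_iff_natDegree.2 ⟨hf1, ?_⟩
  intro g h' hg hh hgh
  have hN := gaussNorm_mul hna hcpos g h'
  have hdeg : g.natDegree + h'.natDegree = r := by rw [hrdef, ← hgh, hg.natDegree_mul hh]
  have hNf : f.gaussNorm v c ≤ s := by
    obtain ⟨i, hi⟩ := exists_eq_gaussNorm v c f
    rw [hi, hv]
    by_cases hir : i ≤ r
    · refine le_of_pow_le_pow_left₀ (n := r) (by omega) hspos.le ?_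
      calc (‖f.coeff i‖ * c ^ i) ^ r = ‖f.coeff i‖ ^ r * (c ^ r) ^ i := by ring
        _ ≤ s ^ (r - i) * s ^ i := by rw [hcr]; gcongr; exact h i hir
        _ = s ^ r := by rw [← pow_add]; congr 1; omega
    · rw [coeff_eq_zero_of_natDegree_lt (by omega)]; simpa using hspos.le
  have key : ∀ q : ℤ_[p][X], q.Monic → c ^ q.natDegree ≤ q.gaussNorm v c := fun q hq => by
    have := le_gaussNorm v q hcpos.le q.natDegree
    rwa [hq.coeff_natDegree, map_one, one_mul] at this
  have key0 : ∀ q : ℤ_[p][X], ‖q.coeff 0‖ ≤ q.gaussNorm v c := fun q => by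
    have := le_gaussNorm v q hcpos.le 0
    rwa [hv, pow_zero, mul_one] at this
  have hprod : g.gaussNorm v c * h'.gaussNorm v c ≤ s := by rw [← hN, hgh]; exact hNf
  have hcc : c ^ g.natDegree * c ^ h'.natDegree = s := by rw [← pow_add, hdeg, hcr]
  have h00 : ‖g.coeff 0‖ * ‖h'.coeff 0‖ = s := by
    rw [← h0, ← hgh, mul_coeff_zero, norm_mul]
  have hgc : g.gaussNorm v c = c ^ g.natDegree := by
    refine le_antisymm ?_ (key g hg)
    refine le_of_mul_le_mul_right ?_ (pow_pos hcpos h'.natDegree)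
    rw [hcc]
    exact (mul_le_mul_of_nonneg_left (key h' hh) (gaussNorm_nonneg v g hcpos.le)).trans hprod
  have hg0pos : 0 < ‖g.coeff 0‖ := lt_of_le_of_ne (norm_nonneg _) fun h => by
    rw [← h, zero_mul] at h00; exact hspos.ne h00
  have hh0pos : 0 < ‖h'.coeff 0‖ := lt_of_le_of_ne (norm_nonneg _) fun h => by
    rw [← h, mul_zero] at h00; exact hspos.ne h00
  have hgn : g.gaussNorm v c = ‖g.coeff 0‖ := by
    refine le_antisymm ?_ (key0 g)
    refine le_of_mul_le_mul_right ?_ hh0pos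
    rw [h00]
    exact (mul_le_mul_of_nonneg_left (key0 h') (gaussNorm_nonneg v g hcpos.le)).trans hprod
  have hg0 : g.coeff 0 ≠ 0 := norm_pos_iff.1 hg0pos
  have heq : ‖g.coeff 0‖ ^ r = s ^ g.natDegree := by
    rw [← hgn, hgc, ← hcr]; ring
  rw [PadicInt.norm_eq_zpow_neg_valuation hg0, hs, ← zpow_natCast, ← zpow_natCast, ← zpow_mul,
    ← zpow_mul] at heq
  have hinj := zpow_right_injective₀ (by linarith) hp.ne' heq
  have hinj' : (g.coeff 0).valuation * r = k * g.natDegree := by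
    zify; linarith
  have hdvd : r ∣ g.natDegree := hk.dvd_of_dvd_mul_left ⟨_, by rw [← hinj']; ring⟩
  rcases Nat.eq_zero_or_pos g.natDegree with h1 | h1
  · exact Or.inl h1
  · right; have := Nat.le_of_dvd h1 hdvd; omega

end Padic


/-- The monic polynomial of degree `r` with lower coefficients `c`. -/
noncomputable def monicOfCoeffs {R : Type*} [CommRing R] {r : ℕ} (c : Fin r → R) : R[X] :=
  X ^ r + ∑ i : Fin r, C (c i) * X ^ (i : ℕ)

section MonicOfCoeffs
variable {R S : Type*} [CommRing R] [CommRing S] {r : ℕ}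

theorem monicOfCoeffs_monic (c : Fin r → R) : (monicOfCoeffs c).Monic :=
  monic_X_pow_add (degree_sum_fin_lt c)

theorem monicOfCoeffs_natDegree [Nontrivial R] (c : Fin r → R) :
    (monicOfCoeffs c).natDegree = r := by
  refine natDegree_eq_of_degree_eq_some ?_
  rw [monicOfCoeffs, degree_add_eq_left_of_degree_lt, degree_X_pow]
  rw [degree_X_pow]; exact degree_sum_fin_lt c

theorem monicOfCoeffs_coeff (c : Fin r → R) (i : Fin r) : (monicOfCoeffs c).coeff i = c i := by
  simp [monicOfCoeffs, coeff_X_pow, i.2.ne, Fin.val_inj]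

theorem monicOfCoeffs_of_monic {f : R[X]} (hm : f.Monic) (hd : f.natDegree = r) :
    monicOfCoeffs (fun i : Fin r => f.coeff i) = f := by
  conv_rhs => rw [hm.as_sum, hd]
  rw [monicOfCoeffs, Fin.sum_univ_eq_sum_range (fun i => C (f.coeff i) * X ^ i)]

theorem monicOfCoeffs_injective : Function.Injective (monicOfCoeffs : (Fin r → R) → R[X]) :=
  fun c d h => funext fun i => by rw [← monicOfCoeffs_coeff c, h, monicOfCoeffs_coeff]

theorem map_monicOfCoeffs (φ : R →+* S) (c : Fin r → R) :
    (monicOfCoeffs c).map φ = monicOfCoeffs (fun i => φ (c i)) := by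
  simp [monicOfCoeffs, Polynomial.map_sum]

end MonicOfCoeffs

/-- The number of monic irreducible polynomials of prime degree `r` over `ZMod p`, times `r`. -/
theorem card_irreducible_mul (p r : ℕ) [Fact p.Prime] (hr : r.Prime) :
    Nat.card {c : Fin r → ZMod p // Irreducible (monicOfCoeffs c)} * r = p ^ r - p := by
  classical
  let K := GaloisField p r
  have hfr : Module.finrank (ZMod p) K = r := GaloisField.finrank p hr.ne_zero
  have hcK : Nat.card K = p ^ r := GaloisField.card p r hr.ne_zero
  have : Finite K := Nat.finite_of_card_ne_zero (by
    rw [hcK]; exact pow_ne_zero _ (Fact.out : p.Prime).ne_zero)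
  let _ := Fintype.ofFinite K
  let S : Finset (Fin r → ZMod p) := Finset.univ.filter fun c => Irreducible (monicOfCoeffs c)
  let T : Finset K := (Finset.univ.image (algebraMap (ZMod p) K))ᶜ
  have hT : T.card = p ^ r - p := by
    rw [Finset.card_compl, Finset.card_image_of_injective _ (algebraMap (ZMod p) K).injective,
      Finset.card_univ, ZMod.card, ← Nat.card_eq_fintype_card, hcK]
  have h_int : ∀ x : K, IsIntegral (ZMod p) x := fun x => Algebra.IsIntegral.isIntegral x
  have hTmem : ∀ x : K, x ∈ T ↔ (minpoly (ZMod p) x).natDegree = r := fun x => by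
    have h1 : (minpoly (ZMod p) x).natDegree = 1 ↔ x ∉ T := by
      simp only [T, Finset.mem_compl, not_not, Finset.mem_image, Finset.mem_univ, true_and]
      exact minpoly.natDegree_eq_one_iff
    have h2 := (Nat.dvd_prime hr).1 (hfr ▸ minpoly.degree_dvd (h_int x))
    have := hr.one_lt
    constructor
    · intro h; exact h2.resolve_left fun h' => h1.1 h' h
    · intro h; by_contra h'; have := h1.2 h'; omega
  let φ : K → (Fin r → ZMod p) := fun x i => (minpoly (ZMod p) x).coeff i
  have hφ : ∀ x ∈ T, monicOfCoeffs (φ x) = minpoly (ZMod p) x := fun x hx =>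
    monicOfCoeffs_of_monic (minpoly.monic (h_int x)) ((hTmem x).1 hx)
  have hmaps : Set.MapsTo φ T S := fun x hx => by
    simp only [S, Finset.coe_filter, Finset.mem_univ, true_and, Set.mem_ofPred_eq]
    rw [hφ x hx]; exact minpoly.irreducible (h_int x)
  have hfib : ∀ c ∈ S, (T.filter fun x => φ x = c).card = r := fun c hc => by
    have hirr : Irreducible (monicOfCoeffs c) := (Finset.mem_filter.1 hc).2
    have hset : (T.filter fun x => φ x = c) = ((monicOfCoeffs c).aroots K).toFinset := by
      ext x
      rw [Finset.mem_filter, Multiset.mem_toFinset, mem_aroots]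
      constructor
      · rintro ⟨hx, rfl⟩
        exact ⟨hirr.ne_zero, by rw [hφ x hx]; exact minpoly.aeval _ _⟩
      · rintro ⟨-, hx⟩
        have hm := minpoly.eq_of_irreducible_of_monic hirr hx (monicOfCoeffs_monic c)
        have hxT : x ∈ T := (hTmem x).2 (by rw [← hm, monicOfCoeffs_natDegree])
        exact ⟨hxT, monicOfCoeffs_injective (by rw [hφ x hxT, hm])⟩
    have hdvd : monicOfCoeffs c ∣ X ^ p ^ r - X := by
      have := (hirr.natDegree_dvd_iff_dvd_X_pow_card_pow_sub_X (n := r)).1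
        (by rw [monicOfCoeffs_natDegree])
      simpa using this
    have hspl : ((X ^ p ^ r - X : (ZMod p)[X]).map (algebraMap (ZMod p) K)).Splits :=
      (FiniteField.isSplittingField_of_nat_card_eq p r hcK).splits
    have hne : (X ^ p ^ r - X : (ZMod p)[X]) ≠ 0 :=
      FiniteField.X_pow_card_pow_sub_X_ne_zero _ hr.ne_zero (Fact.out : p.Prime).one_lt
    have hspl' : ((monicOfCoeffs c).map (algebraMap (ZMod p) K)).Splits :=
      hspl.of_dvd (map_ne_zero hne) (Polynomial.map_dvd _ hdvd)
    have hsep : (monicOfCoeffs c).Separable :=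
      (galois_poly_separable p (p ^ r) (dvd_pow_self p hr.ne_zero)).of_dvd hdvd
    rw [hset, Multiset.toFinset_card_of_nodup (nodup_roots hsep.map),
      ← hspl'.natDegree_eq_card_roots, natDegree_map, monicOfCoeffs_natDegree]
  have := Finset.card_eq_sum_card_fiberwise hmaps
  rw [Finset.sum_congr rfl hfib, Finset.sum_const, hT, smul_eq_mul] at this
  rw [this, Nat.card_eq_fintype_card, Fintype.card_subtype]

/-- An injective continuous endomorphism of a compact group whose range has finite index divides
Haar measure by that index. -/
theorem AddMonoidHom.index_range_mul_measure_image {G : Type*} [AddCommGroup G]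
    [TopologicalSpace G] [IsTopologicalAddGroup G] [CompactSpace G] [T2Space G]
    [MeasurableSpace G] [BorelSpace G] (μ : Measure G) [μ.IsAddHaarMeasure] (ψ : G →+ G)
    (hc : Continuous ψ) (hi : Function.Injective ψ) (hf : ψ.range.index ≠ 0) (s : Set G) :
    ψ.range.index * μ (ψ '' s) = μ s := by
  have emb : MeasurableEmbedding ψ := (hc.isClosedEmbedding hi).measurableEmbedding
  let ν := μ.comap ψ
  have hν : ∀ t, ν t = μ (ψ '' t) := fun t => emb.comap_apply μ t
  have : ψ.range.FiniteIndex := ⟨hf⟩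
  have : IsFiniteMeasure ν := ⟨by rw [hν]; exact measure_lt_top _ _⟩
  have : ν.IsAddLeftInvariant := ⟨fun g => by
    ext t ht
    rw [Measure.map_apply (measurable_const_add g) ht, hν, hν,
      ← measure_preimage_add μ (ψ g) (ψ '' t)]
    congr 1
    ext x
    simp only [Set.mem_image, Set.mem_preimage]
    constructor
    · rintro ⟨y, hy, rfl⟩
      exact ⟨g + y, hy, map_add _ _ _⟩
    · rintro ⟨y, hy, hyx⟩
      exact ⟨-g + y, by simpa using hy, by simp [hyx]⟩⟩
  have hsm := Measure.isAddInvariant_eq_smul_of_compactSpace ν μ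
  set k := Measure.addHaarScalarFactor ν μ
  have hk : ∀ t, μ (ψ '' t) = k * μ t := fun t => by
    rw [← hν, hsm]; rfl
  have hrange : MeasurableSet (ψ.range : Set G) := by
    rw [AddMonoidHom.coe_range]; exact emb.measurableSet_range
  have hidx := ψ.range.index_mul_measure hrange μ
  rw [AddMonoidHom.coe_range, ← Set.image_univ, hk, ← mul_assoc] at hidx
  have h1 : (ψ.range.index : ENNReal) * k = 1 := by
    have hne : μ Set.univ ≠ 0 := NeZero.ne _
    exact (ENNReal.mul_left_inj hne (measure_ne_top _ _)).1 (by rw [hidx, one_mul])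
  rw [hk, ← mul_assoc, h1, one_mul]

section Measure
variable {p r : ℕ} [Fact p.Prime]

/-- Multiplication of the `i`-th coordinate by `p ^ n i`. -/
noncomputable def scaleCoeffs (p : ℕ) [Fact p.Prime] (n : Fin r → ℕ) :
    (Fin r → ℤ_[p]) →+ (Fin r → ℤ_[p]) where
  toFun c i := (p : ℤ_[p]) ^ n i * c i
  map_zero' := by ext; simp
  map_add' _ _ := by ext; simp [mul_add]

/-- The vectors whose `i`-th coordinate is divisible by `p ^ n i`. -/
def divBox (p : ℕ) [Fact p.Prime] (n : Fin r → ℕ) : Set (Fin r → ℤ_[p]) :=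
  {c | ∀ i, (p : ℤ_[p]) ^ n i ∣ c i}

theorem coe_range_scaleCoeffs (n : Fin r → ℕ) :
    ((scaleCoeffs p n).range : Set (Fin r → ℤ_[p])) = divBox p n := by
  ext c
  simp only [AddMonoidHom.coe_range, Set.mem_range, divBox]
  constructor
  · rintro ⟨d, rfl⟩ i
    exact ⟨d i, rfl⟩
  · intro h
    choose d hd using h
    exact ⟨d, funext fun i => (hd i).symm⟩

theorem continuous_scaleCoeffs (n : Fin r → ℕ) : Continuous (scaleCoeffs p n) := by
  change Continuous fun (c : Fin r → ℤ_[p]) i => (p : ℤ_[p]) ^ n i * c i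
  fun_prop

theorem scaleCoeffs_injective (n : Fin r → ℕ) : Function.Injective (scaleCoeffs p n) := by
  intro c d h
  ext1 i
  have := congrFun h i
  exact mul_left_cancel₀ (pow_ne_zero _ (by exact_mod_cast (Fact.out : p.Prime).ne_zero)) this

theorem index_range_scaleCoeffs (n : Fin r → ℕ) :
    (scaleCoeffs p n).range.index = p ^ ∑ i, n i := by
  let φ : (Fin r → ℤ_[p]) →+ ((i : Fin r) → ZMod (p ^ n i)) :=
    { toFun := fun c i => PadicInt.toZModPow (n i) (c i)
      map_zero' := by ext; simp
      map_add' := fun _ _ => by ext; simp }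
  have hφ : Function.Surjective φ := fun d => by
    choose c hc using fun i => ZMod.ringHom_surjective (PadicInt.toZModPow (p := p) (n i)) (d i)
    exact ⟨c, funext hc⟩
  have hker : (scaleCoeffs p n).range = φ.ker := by
    apply SetLike.coe_injective
    rw [coe_range_scaleCoeffs]
    ext c
    change (∀ i, (p : ℤ_[p]) ^ n i ∣ c i) ↔ (fun i => PadicInt.toZModPow (n i) (c i)) = 0
    rw [funext_iff]
    refine forall_congr' fun i => ?_
    rw [← Ideal.mem_span_singleton, ← PadicInt.ker_toZModPow, RingHom.mem_ker]
    rfl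
  rw [hker, AddSubgroup.index_ker, AddMonoidHom.range_eq_top.2 hφ,
    AddSubgroup.card_top, Nat.card_pi]
  simp [Finset.prod_pow_eq_pow_sum]

theorem measurableSet_divBox (n : Fin r → ℕ) : MeasurableSet (divBox p n) := by
  rw [← coe_range_scaleCoeffs, AddMonoidHom.coe_range]
  exact (isCompact_range (continuous_scaleCoeffs n)).isClosed.measurableSet

variable (μ : Measure (Fin r → ℤ_[p])) [μ.IsAddHaarMeasure]

theorem real_image_scaleCoeffs (n : Fin r → ℕ) (s : Set (Fin r → ℤ_[p])) :
    μ.real (scaleCoeffs p n '' s) = ((p : ℝ) ^ ∑ i, n i)⁻¹ * μ.real s := by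
  have hp : p ≠ 0 := (Fact.out : p.Prime).ne_zero
  have := (scaleCoeffs p n).index_range_mul_measure_image μ (continuous_scaleCoeffs n)
    (scaleCoeffs_injective n) (by rw [index_range_scaleCoeffs]; positivity) s
  rw [index_range_scaleCoeffs] at this
  rw [Measure.real, Measure.real, ← this, ENNReal.toReal_mul, ENNReal.toReal_natCast, Nat.cast_pow,
    inv_mul_cancel_left₀ (by positivity)]

theorem real_divBox [IsProbabilityMeasure μ] (n : Fin r → ℕ) :
    μ.real (divBox p n) = ((p : ℝ) ^ ∑ i, n i)⁻¹ := by
  rw [← coe_range_scaleCoeffs, AddMonoidHom.coe_range, ← Set.image_univ, real_image_scaleCoeffs]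
  simp

/-- The effect of substituting `X + t` for `X` on the coefficient vector of a monic polynomial. -/
noncomputable def taylorCoeffs (t : ℤ_[p]) (c : Fin r → ℤ_[p]) : Fin r → ℤ_[p] :=
  fun i => (taylor t (monicOfCoeffs c)).coeff i

theorem taylor_monic {R : Type*} [CommRing R] [IsDomain R] (t : R) {f : R[X]} (hf : f.Monic) :
    (taylor t f).Monic := by
  rw [taylor_apply]
  exact hf.comp_X_add_C t

theorem monicOfCoeffs_taylorCoeffs (t : ℤ_[p]) (c : Fin r → ℤ_[p]) :
    monicOfCoeffs (taylorCoeffs t c) = taylor t (monicOfCoeffs c) :=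
  monicOfCoeffs_of_monic (taylor_monic t (monicOfCoeffs_monic c))
    (by rw [natDegree_taylor, monicOfCoeffs_natDegree])

theorem taylorCoeffs_bijective (t : ℤ_[p]) :
    Function.Bijective (taylorCoeffs t : (Fin r → ℤ_[p]) → _) := by
  constructor
  · intro c d h
    have := congrArg monicOfCoeffs h
    rw [monicOfCoeffs_taylorCoeffs, monicOfCoeffs_taylorCoeffs] at this
    exact monicOfCoeffs_injective (taylor_injective t this)
  · intro d
    refine ⟨taylorCoeffs (-t) d, monicOfCoeffs_injective ?_⟩
    rw [monicOfCoeffs_taylorCoeffs, monicOfCoeffs_taylorCoeffs, taylor_taylor]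
    simp

theorem measure_image_taylorCoeffs (t : ℤ_[p]) (s : Set (Fin r → ℤ_[p])) :
    μ (taylorCoeffs t '' s) = μ s := by
  let L : (Fin r → ℤ_[p]) →ₗ[ℤ_[p]] (Fin r → ℤ_[p]) :=
    LinearMap.pi fun i => (lcoeff ℤ_[p] (i : ℕ)) ∘ₗ taylor t ∘ₗ
      ∑ j : Fin r, (monomial (j : ℕ)) ∘ₗ LinearMap.proj j
  set b := taylorCoeffs t (0 : Fin r → ℤ_[p]) with hb
  have hL : ∀ c, taylorCoeffs t c = b + L c := fun c => by
    ext i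
    simp [L, hb, taylorCoeffs, monicOfCoeffs, C_mul_X_pow_eq_monomial]
  have hbij : Function.Bijective L := by
    have : (L : (Fin r → ℤ_[p]) → _) = (fun x => -b + x) ∘ taylorCoeffs t := by
      ext1 c; simp [hL]
    rw [this]
    exact (Equiv.addLeft (-b)).bijective.comp (taylorCoeffs_bijective t)
  have hidx : L.toAddMonoidHom.range.index = 1 := by
    rw [AddMonoidHom.range_eq_top.2 hbij.2, AddSubgroup.index_top]
  have := L.toAddMonoidHom.index_range_mul_measure_image μ L.continuous_on_pi hbij.1
    (by rw [hidx]; exact one_ne_zero) s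
  rw [hidx, Nat.cast_one, one_mul] at this
  have himage : taylorCoeffs t '' s = (fun x => -b + x) ⁻¹' (L '' s) := by
    rw [← Set.image_add_left, ← Set.image_comp]
    exact Set.image_congr fun c _ => hL c
  rw [himage, measure_preimage_add]
  exact this

end Measure

section Slope

/-- The ceiling of `k * (r - i) / r`. -/
def slopeExp (r k i : ℕ) : ℕ := (k * (r - i) + (r - 1)) / r

theorem slopeExp_le_iff {r k i v : ℕ} (hr : 0 < r) :
    slopeExp r k i ≤ v ↔ k * (r - i) ≤ v * r := by
  rw [slopeExp, ← Nat.lt_succ_iff, Nat.div_lt_iff_lt_mul hr, Nat.succ_mul]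
  omega

theorem slopeExp_zero {r : ℕ} (hr : 0 < r) (k : ℕ) : slopeExp r k 0 = k := by
  apply le_antisymm
  · rw [slopeExp_le_iff hr]; simp
  · have := (slopeExp_le_iff (k := k) (i := 0) hr).1 le_rfl
    exact Nat.le_of_mul_le_mul_right (by simpa using this) hr

theorem slopeExp_self {r : ℕ} (hr : 0 < r) (i : ℕ) : slopeExp r r i = r - i := by
  apply le_antisymm
  · rw [slopeExp_le_iff hr, mul_comm]
  · have := (slopeExp_le_iff (k := r) (i := i) hr).1 le_rfl
    exact Nat.le_of_mul_le_mul_right (by rw [mul_comm]; exact this) hr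

theorem slopeExp_one {r i : ℕ} (hi : i < r) : slopeExp r 1 i = 1 := by
  have hr : 0 < r := by omega
  apply le_antisymm
  · rw [slopeExp_le_iff hr]; omega
  · by_contra h
    have := (slopeExp_le_iff (k := 1) (i := i) (v := 0) hr).1 (by omega)
    omega

theorem slopeExp_mono {r k l i : ℕ} (hr : 0 < r) (h : k ≤ l) :
    slopeExp r k i ≤ slopeExp r l i := by
  rw [slopeExp_le_iff hr]
  exact (Nat.mul_le_mul_right _ h).trans ((slopeExp_le_iff hr).1 le_rfl)

theorem slopeExp_add_slopeExp {r k i j : ℕ} (hij : i + j = r) (hi : 0 < i) (hj : 0 < j)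
    (hk : r.Coprime k) : slopeExp r k i + slopeExp r k j = k + 1 := by
  have hr : 0 < r := by omega
  have hi' : r - i = j := by omega
  have hj' : r - j = i := by omega
  have hnd : (k * j) % r ≠ 0 := fun h => by
    have := Nat.le_of_dvd hj (hk.dvd_of_dvd_mul_left (Nat.dvd_of_mod_eq_zero h))
    omega
  have hdm := Nat.div_add_mod (k * j) r
  have hlt := Nat.mod_lt (k * j) hr
  set q := k * j / r
  set s := k * j % r
  have hsum : k * i + k * j = k * r := by rw [← hij]; ring
  have h1 : slopeExp r k i = q + 1 := by
    rw [slopeExp, hi']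
    refine Nat.div_eq_of_lt_le ?_ ?_
    · linarith [Nat.sub_add_cancel hr, Nat.pos_of_ne_zero hnd, mul_comm q r, add_mul q 1 r]
    · have : (q + 1 + 1) * r = r * q + 2 * r := by ring
      omega
  have h2 : slopeExp r k j + q = k := by
    have hqk : q ≤ k := by
      by_contra hlt'
      have : (k + 1) * r ≤ q * r := Nat.mul_le_mul_right _ (by omega)
      nlinarith
    obtain ⟨d, hd⟩ := Nat.exists_eq_add_of_le hqk
    have hdi : k * i + s = d * r := by
      have : k * r = q * r + d * r := by rw [hd]; ring
      have : r * q = q * r := mul_comm _ _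
      omega
    have : slopeExp r k j = d := by
      rw [slopeExp, hj']
      refine Nat.div_eq_of_lt_le ?_ ?_
      · omega
      · have : (d + 1) * r = d * r + r := by ring
        omega
    omega
  omega

theorem two_mul_sum_slopeExp {r k : ℕ} (hr : 0 < r) (hk : r.Coprime k) :
    2 * ∑ i : Fin r, slopeExp r k i + 1 = r * k + r + k := by
  obtain ⟨m, rfl⟩ : ∃ m, r = m + 1 := ⟨r - 1, by omega⟩
  rw [Fin.sum_univ_eq_sum_range (fun i => slopeExp (m + 1) k i), Finset.sum_range_succ',
    slopeExp_zero hr]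
  have h := Finset.sum_range_reflect (fun i => slopeExp (m + 1) k (i + 1)) m
  have h2 : ∑ i ∈ Finset.range m, (slopeExp (m + 1) k (i + 1) +
      slopeExp (m + 1) k (m - 1 - i + 1)) = m * (k + 1) := by
    rw [Finset.sum_congr rfl (g := fun _ => k + 1), Finset.sum_const, Finset.card_range,
      smul_eq_mul]
    intro i hi
    rw [Finset.mem_range] at hi
    exact slopeExp_add_slopeExp (by omega) (by omega) (by omega) hk
  rw [Finset.sum_add_distrib, h] at h2
  linarith

theorem two_mul_sum_slopeExp_self {r : ℕ} (hr : 0 < r) :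
    2 * ∑ i : Fin r, slopeExp r r i = r * (r + 1) := by
  simp only [slopeExp_self hr]
  rw [Fin.sum_univ_eq_sum_range (fun i => r - i), ← Finset.sum_range_reflect]
  rw [Finset.sum_congr rfl (g := fun i => i + 1)
    (fun i hi => by rw [Finset.mem_range] at hi; omega)]
  rw [mul_comm, ← Finset.sum_range_succ' (fun i => i) r |>.trans (add_zero _),
    Finset.sum_range_id_mul_two]
  simp [mul_comm]

theorem pow_slopeExp_dvd_iff {p : ℕ} [Fact p.Prime] {r : ℕ} (hr : 0 < r) (k i : ℕ) (x : ℤ_[p]) :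
    (p : ℤ_[p]) ^ slopeExp r k i ∣ x ↔ ‖x‖ ^ r ≤ ((p : ℝ) ^ (-(k : ℤ))) ^ (r - i) := by
  have hp : (1 : ℝ) < p := by exact_mod_cast (Fact.out : p.Prime).one_lt
  rcases eq_or_ne x 0 with rfl | hx
  · simp [hr.ne']
  rw [← Ideal.mem_span_singleton, PadicInt.mem_span_pow_iff_le_valuation x hx, slopeExp_le_iff hr,
    PadicInt.norm_eq_zpow_neg_valuation hx, ← zpow_natCast, ← zpow_natCast, ← zpow_mul, ← zpow_mul,
    zpow_le_zpow_iff_right₀ hp]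
  zify
  constructor <;> intro h <;> linarith

end Slope

section Recursion
variable {p r : ℕ} [Fact p.Prime]

/-- Coefficient vectors of monic polynomials of degree `r` whose Newton polygon lies on or above
the segment from `(0, k)` to `(r, 0)`. -/
def slopeBox (p : ℕ) [Fact p.Prime] (r k : ℕ) : Set (Fin r → ℤ_[p]) :=
  divBox p fun i : Fin r => slopeExp r k i

/-- Coefficient vectors of the irreducible monic polynomials of degree `r` over `ℤ_p`. -/
def irredSet (p : ℕ) [Fact p.Prime] (r : ℕ) : Set (Fin r → ℤ_[p]) :=
  {c | Irreducible (monicOfCoeffs c)}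

theorem mem_slopeBox (hr : 0 < r) {k : ℕ} {c : Fin r → ℤ_[p]} :
    c ∈ slopeBox p r k ↔ ∀ i : Fin r, ‖c i‖ ^ r ≤ ((p : ℝ) ^ (-(k : ℤ))) ^ (r - (i : ℕ)) :=
  forall_congr' fun i => pow_slopeExp_dvd_iff hr k i (c i)

theorem mem_irredSet_of_mem_slopeBox (hr : r.Prime) {k : ℕ} (hk0 : 0 < k) (hk : k < r)
    {c : Fin r → ℤ_[p]} (hc : c ∈ slopeBox p r k)
    (h0 : ¬ (p : ℤ_[p]) ^ (k + 1) ∣ c ⟨0, hr.pos⟩) : c ∈ irredSet p r := by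
  have hd := monicOfCoeffs_natDegree c
  have hcop : r.Coprime k := Nat.coprime_of_lt_prime hk0.ne' hk hr
  have hc0 : (monicOfCoeffs c).coeff 0 = c ⟨0, hr.pos⟩ := monicOfCoeffs_coeff c ⟨0, hr.pos⟩
  refine irreducible_of_norm_coeff_zero (k := k) (monicOfCoeffs_monic c) (by rwa [hd])
    (by rw [hd]; exact hr.one_lt) ?_ ?_
  · rw [hc0]
    have h1 := hc ⟨0, hr.pos⟩
    simp only [slopeExp_zero hr.pos] at h1
    apply le_antisymm
    · rwa [PadicInt.norm_le_pow_iff_mem_span_pow, Ideal.mem_span_singleton]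
    · rw [← Ideal.mem_span_singleton, ← PadicInt.norm_le_pow_iff_mem_span_pow,
        PadicInt.norm_le_pow_iff_norm_lt_pow_add_one, not_lt] at h0
      simpa using h0
  · rw [hd]
    intro i hi
    rcases hi.eq_or_lt with rfl | hi
    · have := (monicOfCoeffs_monic c).coeff_natDegree
      rw [hd] at this
      simp [this]
    · have := (mem_slopeBox hr.pos).1 hc ⟨i, hi⟩
      rwa [← monicOfCoeffs_coeff c] at this

theorem mem_slopeBox_succ (hr : 0 < r) {k : ℕ} {c : Fin r → ℤ_[p]} (hc : c ∈ irredSet p r)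
    (h0 : (p : ℤ_[p]) ^ (k + 1) ∣ c ⟨0, hr⟩) : c ∈ slopeBox p r (k + 1) := by
  rw [mem_slopeBox hr]
  intro i
  have h := norm_coeff_pow_le_of_irreducible (monicOfCoeffs_monic c) hc i
    (by rw [monicOfCoeffs_natDegree]; exact i.2.le)
  rw [monicOfCoeffs_natDegree, monicOfCoeffs_coeff] at h
  refine h.trans (pow_le_pow_left₀ (norm_nonneg _) ?_ _)
  rwa [PadicInt.norm_le_pow_iff_mem_span_pow, Ideal.mem_span_singleton,
    show (monicOfCoeffs c).coeff 0 = c ⟨0, hr⟩ from monicOfCoeffs_coeff c ⟨0, hr⟩]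

variable (μ : Measure (Fin r → ℤ_[p])) [μ.IsAddHaarMeasure]

/-- Inside `slopeBox p r k` with `0 < k < r`, the polynomials whose Newton polygon is exactly the
segment are all irreducible, and the other irreducible ones lie in `slopeBox p r (k + 1)`. -/
theorem real_irredSet_inter_slopeBox [IsProbabilityMeasure μ] (hr : r.Prime) {k : ℕ}
    (hk0 : 0 < k) (hk : k < r) :
    μ.real (irredSet p r ∩ slopeBox p r k) =
      ((p : ℝ) ^ ∑ i : Fin r, slopeExp r k i)⁻¹ * (1 - (p : ℝ)⁻¹) +
        μ.real (irredSet p r ∩ slopeBox p r (k + 1)) := by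
  let z : Fin r := ⟨0, hr.pos⟩
  let n : Fin r → ℕ := fun i => slopeExp r k i
  have hnz : n z = k := slopeExp_zero hr.pos k
  let n' : Fin r → ℕ := Function.update n z (k + 1)
  have hmem : ∀ c, c ∈ divBox p n' ↔ c ∈ slopeBox p r k ∧ (p : ℤ_[p]) ^ (k + 1) ∣ c z := by
    intro c
    constructor
    · intro h
      have hz : (p : ℤ_[p]) ^ (k + 1) ∣ c z := by simpa [n'] using h z
      refine ⟨fun i => ?_, hz⟩
      rcases eq_or_ne i z with rfl | hi
      · exact (pow_dvd_pow _ (by change n z ≤ k + 1; omega)).trans hz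
      · simpa [n', Function.update_of_ne hi] using h i
    · rintro ⟨h, hz⟩ i
      rcases eq_or_ne i z with rfl | hi
      · simpa [n'] using hz
      · simpa [n', Function.update_of_ne hi] using h i
  have hsum : ∑ i, n' i = ∑ i, n i + 1 := by
    rw [Finset.sum_update_of_mem (Finset.mem_univ z),
      ← Finset.add_sum_erase _ n (Finset.mem_univ z), hnz, Finset.sdiff_singleton_eq_erase]
    ring
  have hsub : divBox p n' ⊆ slopeBox p r k := fun c hc => ((hmem c).1 hc).1
  have h1 : irredSet p r ∩ slopeBox p r k ∩ divBox p n' =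
      irredSet p r ∩ slopeBox p r (k + 1) := by
    ext c
    constructor
    · rintro ⟨⟨hc, -⟩, hc'⟩
      exact ⟨hc, mem_slopeBox_succ hr.pos hc ((hmem c).1 hc').2⟩
    · rintro ⟨hc, hc'⟩
      have hck : c ∈ slopeBox p r k := fun i =>
        (pow_dvd_pow _ (slopeExp_mono hr.pos (Nat.le_succ k))).trans (hc' i)
      refine ⟨⟨hc, hck⟩, (hmem c).2 ⟨hck, ?_⟩⟩
      simpa [z, slopeExp_zero hr.pos] using hc' z
  have h2 : (irredSet p r ∩ slopeBox p r k) \ divBox p n' = slopeBox p r k \ divBox p n' := by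
    ext c
    constructor
    · rintro ⟨⟨-, hc⟩, hc'⟩
      exact ⟨hc, hc'⟩
    · rintro ⟨hc, hc'⟩
      exact ⟨⟨mem_irredSet_of_mem_slopeBox hr hk0 hk hc fun h => hc' ((hmem c).2 ⟨hc, h⟩), hc⟩, hc'⟩
  rw [← measureReal_inter_add_sdiff (measurableSet_divBox n'), h1, h2,
    measureReal_sdiff hsub (measurableSet_divBox n'), real_divBox, hsum,
    show μ.real (slopeBox p r k) = _ from real_divBox μ n,
    pow_succ, mul_inv]
  ring

theorem Irreducible.scaleRoots {K : Type*} [Field K] {f : K[X]} (hf : Irreducible f) {s : K}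
    (hs : s ≠ 0) : Irreducible (f.scaleRoots s) := by
  have hunit : ∀ (g : K[X]) (t : K), IsUnit (g.scaleRoots t) ↔ IsUnit g := fun g t => by
    rw [isUnit_iff_degree_eq_zero, isUnit_iff_degree_eq_zero, degree_scaleRoots]
  refine ⟨fun h => hf.not_isUnit ((hunit f s).1 h), fun a b hab => ?_⟩
  rw [← hunit a s⁻¹, ← hunit b s⁻¹]
  refine hf.isUnit_or_isUnit ?_
  rw [← mul_scaleRoots_of_noZeroDivisors, ← hab, ← scaleRoots_mul, mul_inv_cancel₀ hs,
    scaleRoots_one]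

theorem irreducible_scaleRoots_iff {K : Type*} [Field K] {f : K[X]} {s : K} (hs : s ≠ 0) :
    Irreducible (f.scaleRoots s) ↔ Irreducible f := by
  refine ⟨fun h => ?_, fun h => h.scaleRoots hs⟩
  have := h.scaleRoots (inv_ne_zero hs)
  rwa [← scaleRoots_mul, mul_inv_cancel₀ hs, scaleRoots_one] at this

/-- Substituting `p X` for `X` identifies the irreducible polynomials in `slopeBox p r r` with all
irreducible polynomials. -/
theorem real_irredSet_inter_slopeBox_self (hr : r.Prime) :
    μ.real (irredSet p r ∩ slopeBox p r r) =
      ((p : ℝ) ^ ∑ i : Fin r, slopeExp r r i)⁻¹ * μ.real (irredSet p r) := by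
  rw [← real_image_scaleCoeffs]
  congr 1
  have hp : (p : ℤ_[p]) ≠ 0 := by exact_mod_cast (Fact.out : p.Prime).ne_zero
  have hirr : ∀ c : Fin r → ℤ_[p], Irreducible (monicOfCoeffs
      (scaleCoeffs p (fun i : Fin r => slopeExp r r i) c)) ↔ Irreducible (monicOfCoeffs c) := by
    intro c
    have hs : monicOfCoeffs (scaleCoeffs p (fun i : Fin r => slopeExp r r i) c) =
        (monicOfCoeffs c).scaleRoots (p : ℤ_[p]) := by
      rw [← monicOfCoeffs_of_monic (r := r)
        ((monic_scaleRoots_iff _).2 (monicOfCoeffs_monic c) :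
          ((monicOfCoeffs c).scaleRoots (p : ℤ_[p])).Monic)
        (by rw [natDegree_scaleRoots, monicOfCoeffs_natDegree])]
      congr 1
      ext1 i
      rw [coeff_scaleRoots, monicOfCoeffs_coeff, monicOfCoeffs_natDegree, mul_comm]
      change (p : ℤ_[p]) ^ slopeExp r r i * c i = _
      rw [slopeExp_self hr.pos]
    rw [(monicOfCoeffs_monic _).irreducible_iff_irreducible_map_fraction_map (K := ℚ_[p]), hs,
      map_scaleRoots _ _ _ (by simp [(monicOfCoeffs_monic c).leadingCoeff]),
      irreducible_scaleRoots_iff (by simpa using hp),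
      ← (monicOfCoeffs_monic _).irreducible_iff_irreducible_map_fraction_map]
  rw [slopeBox, ← coe_range_scaleCoeffs, AddMonoidHom.coe_range]
  ext c
  constructor
  · rintro ⟨hc, d, rfl⟩
    exact ⟨d, (hirr d).1 hc, rfl⟩
  · rintro ⟨d, hd, rfl⟩
    exact ⟨(hirr d).2 hd, d, rfl⟩

end Recursion

section Total
variable {p r : ℕ} [Fact p.Prime]

/-- Reduction of a coefficient vector modulo `p`. -/
noncomputable def reduceCoeffs (c : Fin r → ℤ_[p]) : Fin r → ZMod p :=
  fun i => PadicInt.toZMod (c i)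

theorem map_toZMod_monicOfCoeffs (c : Fin r → ℤ_[p]) :
    (monicOfCoeffs c).map PadicInt.toZMod = monicOfCoeffs (reduceCoeffs c) :=
  map_monicOfCoeffs _ c

theorem reduceCoeffs_surjective :
    Function.Surjective (reduceCoeffs : (Fin r → ℤ_[p]) → Fin r → ZMod p) := fun d => by
  choose c hc using fun i => ZMod.ringHom_surjective (PadicInt.toZMod (p := p)) (d i)
  exact ⟨c, funext hc⟩

theorem mem_slopeBox_one_iff {c : Fin r → ℤ_[p]} :
    c ∈ slopeBox p r 1 ↔ reduceCoeffs c = 0 := by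
  rw [funext_iff]
  refine forall_congr' fun i => ?_
  change (p : ℤ_[p]) ^ slopeExp r 1 i ∣ c i ↔ _
  rw [slopeExp_one i.2, pow_one, ← PadicInt.norm_lt_one_iff_dvd, norm_lt_one_iff_toZMod_eq_zero]
  rfl

theorem reduceCoeffs_preimage (c : Fin r → ℤ_[p]) :
    reduceCoeffs ⁻¹' {reduceCoeffs c} = (fun x => -c + x) ⁻¹' slopeBox p r 1 := by
  ext x
  rw [Set.mem_preimage, Set.mem_preimage, Set.mem_singleton_iff, mem_slopeBox_one_iff, funext_iff,
    funext_iff]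
  refine forall_congr' fun i => ?_
  change PadicInt.toZMod (x i) = PadicInt.toZMod (c i) ↔ PadicInt.toZMod (-c i + x i) = 0
  rw [map_add, map_neg, neg_add_eq_zero, eq_comm]

theorem measurableSet_reduceCoeffs_preimage (d : Fin r → ZMod p) :
    MeasurableSet ((reduceCoeffs : (Fin r → ℤ_[p]) → _) ⁻¹' {d}) := by
  obtain ⟨c, rfl⟩ := reduceCoeffs_surjective d
  rw [reduceCoeffs_preimage]
  exact measurable_const_add _ (measurableSet_divBox _)

variable (μ : Measure (Fin r → ℤ_[p])) [μ.IsAddHaarMeasure]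

theorem real_reduceCoeffs_preimage [IsProbabilityMeasure μ] (d : Fin r → ZMod p) :
    μ.real (reduceCoeffs ⁻¹' {d}) = ((p : ℝ) ^ r)⁻¹ := by
  obtain ⟨c, rfl⟩ := reduceCoeffs_surjective d
  rw [reduceCoeffs_preimage, Measure.real, measure_preimage_add, ← Measure.real, slopeBox,
    real_divBox]
  simp [slopeExp_one]

/-- Every monic lift of an irreducible polynomial is irreducible. -/
theorem irredSet_inter_preimage_of_irreducible {d : Fin r → ZMod p}
    (hd : Irreducible (monicOfCoeffs d)) :
    irredSet p r ∩ reduceCoeffs ⁻¹' {d} = reduceCoeffs ⁻¹' {d} := by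
  refine Set.inter_eq_right.2 fun c hc => ?_
  refine (monicOfCoeffs_monic c).irreducible_of_irreducible_map PadicInt.toZMod _ ?_
  rwa [map_toZMod_monicOfCoeffs, show reduceCoeffs c = d from hc]

/-- The residue discs of the polynomials `(X - a) ^ r` contribute equally, by translation. -/
theorem real_irredSet_inter_preimage_of_eq_pow {d : Fin r → ZMod p} {a : ZMod p}
    (hd : monicOfCoeffs d = (X - C a) ^ r) :
    μ.real (irredSet p r ∩ reduceCoeffs ⁻¹' {d}) = μ.real (irredSet p r ∩ slopeBox p r 1) := by
  obtain ⟨t, rfl⟩ := ZMod.ringHom_surjective (PadicInt.toZMod (p := p)) a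
  rw [Measure.real, Measure.real, 
    ← measure_image_taylorCoeffs μ (-t) (irredSet p r ∩ slopeBox p r 1)]
  congr 2
  have h0 : (monicOfCoeffs (0 : Fin r → ZMod p)) = X ^ r := by simp [monicOfCoeffs]
  have hX : (X - C (PadicInt.toZMod t)) ^ r = taylor (-PadicInt.toZMod t) (X ^ r) := by
    simp [taylor_apply, sub_eq_add_neg]
  have hmem : ∀ c, taylorCoeffs (-t) c ∈ irredSet p r ∩ reduceCoeffs ⁻¹' {d} ↔
      c ∈ irredSet p r ∩ slopeBox p r 1 := by
    intro c
    have hmap : (taylor (-t) (monicOfCoeffs c)).map PadicInt.toZMod =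
        taylor (-PadicInt.toZMod t) (monicOfCoeffs (reduceCoeffs c)) := by
      simp [taylor_apply, Polynomial.map_comp, map_toZMod_monicOfCoeffs]
    refine and_congr ?_ ?_
    · change Irreducible _ ↔ Irreducible _
      rw [monicOfCoeffs_taylorCoeffs]
      exact MulEquiv.irreducible_iff (taylorEquiv (-t))
    · rw [mem_slopeBox_one_iff, Set.mem_preimage, Set.mem_singleton_iff,
        ← monicOfCoeffs_injective.eq_iff, ← map_toZMod_monicOfCoeffs, monicOfCoeffs_taylorCoeffs,
        hmap, hd, hX, (taylor_injective _).eq_iff, ← h0, monicOfCoeffs_injective.eq_iff]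
  ext c
  obtain ⟨c, rfl⟩ := (taylorCoeffs_bijective (-t)).2 c
  rw [hmem, (taylorCoeffs_bijective (-t)).1.mem_set_image]

/-- Splitting the irreducible polynomials according to their reduction modulo `p`. -/
theorem real_irredSet [IsProbabilityMeasure μ] (hr : r.Prime) :
    μ.real (irredSet p r) =
      Nat.card {d : Fin r → ZMod p // Irreducible (monicOfCoeffs d)} * ((p : ℝ) ^ r)⁻¹ +
        p * μ.real (irredSet p r ∩ slopeBox p r 1) := by
  classical
  set m := μ.real (irredSet p r ∩ slopeBox p r 1) with hm
  have hsum : μ.real (irredSet p r) =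
      ∑ d : Fin r → ZMod p, μ.real (irredSet p r ∩ reduceCoeffs ⁻¹' {d}) := by
    have := sum_measureReal_preimage_singleton (μ := μ.restrict (irredSet p r))
      (Finset.univ : Finset (Fin r → ZMod p)) (f := reduceCoeffs)
      fun d _ => measurableSet_reduceCoeffs_preimage d
    simp only [Finset.coe_univ, Set.preimage_univ, measureReal_restrict_apply_univ] at this
    rw [← this]
    refine Finset.sum_congr rfl fun d _ => ?_
    rw [measureReal_restrict_apply (measurableSet_reduceCoeffs_preimage d), Set.inter_comm]
  let ρ : ZMod p → (Fin r → ZMod p) := fun a i => ((X - C a) ^ r : (ZMod p)[X]).coeff i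
  have hρ : ∀ a, monicOfCoeffs (ρ a) = (X - C a) ^ r := fun a =>
    monicOfCoeffs_of_monic ((monic_X_sub_C a).pow r) (by simp)
  have hρi : Function.Injective ρ := fun a b h => by
    have := congrArg (eval a) ((hρ a).symm.trans ((congrArg monicOfCoeffs h).trans (hρ b)))
    simpa [hr.ne_zero, sub_eq_zero, eq_comm] using this
  have hnot : ∀ a, ¬ Irreducible (monicOfCoeffs (ρ a)) := fun a h => by
    rw [hρ] at h
    exact not_irreducible_pow hr.ne_one h
  have hterm : ∀ d : Fin r → ZMod p, μ.real (irredSet p r ∩ reduceCoeffs ⁻¹' {d}) =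
      (if Irreducible (monicOfCoeffs d) then ((p : ℝ) ^ r)⁻¹ else 0) +
        if d ∈ Finset.univ.image ρ then m else 0 := by
    intro d
    by_cases h1 : Irreducible (monicOfCoeffs d)
    · have h2 : d ∉ Finset.univ.image ρ := fun h => by
        obtain ⟨a, -, rfl⟩ := Finset.mem_image.1 h
        exact hnot a h1
      rw [if_pos h1, if_neg h2, irredSet_inter_preimage_of_irreducible h1,
        real_reduceCoeffs_preimage, add_zero]
    rw [if_neg h1, zero_add]
    split_ifs with h2
    · obtain ⟨a, -, rfl⟩ := Finset.mem_image.1 h2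
      exact real_irredSet_inter_preimage_of_eq_pow μ (hρ a)
    · rw [show irredSet p r ∩ reduceCoeffs ⁻¹' {d} = ∅ from ?_, measureReal_empty]
      refine Set.eq_empty_of_forall_notMem ?_
      rintro c ⟨hc, rfl⟩
      have hd := monicOfCoeffs_natDegree c
      rcases irreducible_map_toZMod_or_eq_pow (monicOfCoeffs_monic c) hc (by rwa [hd]) with
        h | ⟨a, h⟩
      · rw [map_toZMod_monicOfCoeffs] at h
        exact h1 h
      · rw [map_toZMod_monicOfCoeffs, hd, ← hρ, monicOfCoeffs_injective.eq_iff] at h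
        exact h2 (Finset.mem_image.2 ⟨a, Finset.mem_univ _, h.symm⟩)
  rw [hsum, Finset.sum_congr rfl fun d _ => hterm d, Finset.sum_add_distrib, ← Finset.sum_filter,
    Finset.sum_const, Finset.sum_ite_mem, Finset.univ_inter, Finset.sum_const,
    Finset.card_image_of_injective _ hρi, Finset.card_univ, ZMod.card, Nat.card_eq_fintype_card,
    Fintype.card_subtype, nsmul_eq_mul, nsmul_eq_mul]

theorem real_irredSet_inter_slopeBox_one [IsProbabilityMeasure μ] (hr : r.Prime) :
    μ.real (irredSet p r ∩ slopeBox p r 1) =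
      (∑ j ∈ Finset.range (r - 1), ((p : ℝ) ^ ∑ i : Fin r, slopeExp r (j + 1) i)⁻¹) *
        (1 - (p : ℝ)⁻¹) +
      ((p : ℝ) ^ ∑ i : Fin r, slopeExp r r i)⁻¹ * μ.real (irredSet p r) := by
  have h : ∀ n ≤ r - 1, μ.real (irredSet p r ∩ slopeBox p r 1) =
      (∑ j ∈ Finset.range n, ((p : ℝ) ^ ∑ i : Fin r, slopeExp r (j + 1) i)⁻¹) *
        (1 - (p : ℝ)⁻¹) + μ.real (irredSet p r ∩ slopeBox p r (n + 1)) := by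
    intro n hn
    induction n with
    | zero => simp
    | succ n ih =>
      rw [ih (by omega), Finset.sum_range_succ,
        real_irredSet_inter_slopeBox μ hr (Nat.succ_pos n) (by omega)]
      ring
  have h1 := h (r - 1) le_rfl
  rwa [Nat.sub_add_cancel hr.pos, real_irredSet_inter_slopeBox_self μ hr] at h1

theorem real_irredSet_eq [IsProbabilityMeasure μ] (hr : r.Prime) :
    μ.real (irredSet p r) =
      (((p : ℝ) ^ r - p) * (1 - (p : ℝ) ^ (-((r : ℝ) + 1) / 2)) +
          r * ((p : ℝ) - 1) * (1 - (p : ℝ) ^ (-((r : ℝ) + 1) * ((r : ℝ) - 1) / 2))) /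
        (r * (p : ℝ) ^ r * (1 - (p : ℝ) ^ (-(r : ℝ) * ((r : ℝ) + 1) / 2 + 1)) *
          (1 - (p : ℝ) ^ (-((r : ℝ) + 1) / 2))) := by
  have hp1 : (1 : ℝ) < p := by exact_mod_cast (Fact.out : p.Prime).one_lt
  have hp0 : (0 : ℝ) < p := by linarith
  have hr1 : (1 : ℝ) < r := by exact_mod_cast hr.one_lt
  set q : ℝ := (p : ℝ) ^ (-((r : ℝ) + 1) / 2) with hq
  have hq1 : q < 1 := Real.rpow_lt_one_of_one_lt_of_neg hp1 (by linarith)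
  have hqr : (p : ℝ) ^ (-((r : ℝ) + 1) * ((r : ℝ) - 1) / 2) = q ^ (r - 1) := by
    rw [hq, ← Real.rpow_natCast, ← Real.rpow_mul hp0.le, Nat.cast_sub hr.pos]
    congr 1; push_cast; ring
  have hD1 : (p : ℝ) ^ (-(r : ℝ) * ((r : ℝ) + 1) / 2 + 1) < 1 :=
    Real.rpow_lt_one_of_one_lt_of_neg hp1 (by nlinarith)
  have hD : (p : ℝ) * ((p : ℝ) ^ ∑ i : Fin r, slopeExp r r i)⁻¹ =
      (p : ℝ) ^ (-(r : ℝ) * ((r : ℝ) + 1) / 2 + 1) := by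
    have h2 : (2 : ℝ) * (∑ i : Fin r, slopeExp r r i : ℕ) = r * (r + 1) := by
      exact_mod_cast two_mul_sum_slopeExp_self hr.pos
    rw [Real.rpow_add_one hp0.ne', mul_comm, ← Real.rpow_natCast, ← Real.rpow_neg hp0.le]
    congr 2; linarith
  have hs : ∀ j ∈ Finset.range (r - 1), ((p : ℝ) ^ ∑ i : Fin r, slopeExp r (j + 1) i)⁻¹ =
      ((p : ℝ) ^ r)⁻¹ * q ^ j := by
    intro j hj
    rw [Finset.mem_range] at hj
    have h2 : (2 : ℝ) * (∑ i : Fin r, slopeExp r (j + 1) i : ℕ) + 1 =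
        r * (j + 1) + r + (j + 1) := by
      exact_mod_cast two_mul_sum_slopeExp hr.pos
        (Nat.coprime_of_lt_prime (Nat.succ_ne_zero j) (by omega) hr)
    rw [hq, ← Real.rpow_natCast, ← Real.rpow_natCast, ← Real.rpow_natCast, ← Real.rpow_neg hp0.le,
      ← Real.rpow_neg hp0.le, ← Real.rpow_mul hp0.le, ← Real.rpow_add hp0]
    congr 1; linarith
  have hN : (Nat.card {d : Fin r → ZMod p // Irreducible (monicOfCoeffs d)} : ℝ) * r =
      (p : ℝ) ^ r - p := by
    have h1 := card_irreducible_mul p r hr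
    have h2 : p ≤ p ^ r := Nat.le_self_pow hr.ne_zero p
    rw [← Nat.cast_mul, h1, Nat.cast_sub h2, Nat.cast_pow]
  have hα := real_irredSet μ hr
  rw [real_irredSet_inter_slopeBox_one μ hr, Finset.sum_congr rfl hs, ← Finset.mul_sum,
    geom_sum_eq hq1.ne, mul_add, ← mul_assoc (p : ℝ) (_⁻¹) (μ.real _), hD] at hα
  rw [hqr]
  set D := (p : ℝ) ^ (-(r : ℝ) * ((r : ℝ) + 1) / 2 + 1)
  set α := μ.real (irredSet p r)
  set N := (Nat.card {d : Fin r → ZMod p // Irreducible (monicOfCoeffs d)} : ℝ)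
  have hpr : (p : ℝ) ^ r ≠ 0 := by positivity
  have hq' : 1 - q ≠ 0 := by linarith
  have hq'' : q - 1 ≠ 0 := by linarith
  have hD' : 1 - D ≠ 0 := by linarith
  have hr0 : (r : ℝ) ≠ 0 := by linarith
  rw [eq_div_iff (by positivity), ← hN]
  field_simp at hα
  linear_combination (-r : ℝ) * hα

end Total

/-- For primes `p ≠ r`, the Haar-measure proportion of monic degree-`r` polynomials
over `ℤ_p` (identified with `ℤ_p^r` via their non-leading coefficients) that are
irreducible equals the stated rational function of `p`. -/
theorem stmt_8 (p r : ℕ) [Fact p.Prime] (hr : r.Prime) (hpr : p ≠ r)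
    (μ : Measure (Fin r → ℤ_[p])) [μ.IsAddHaarMeasure] :
    (μ {c : Fin r → ℤ_[p] |
        Irreducible (X ^ r + ∑ i : Fin r, C (c i) * X ^ (i : ℕ))}).toReal /
      (μ Set.univ).toReal =
      (((p : ℝ) ^ r - p) * (1 - (p : ℝ) ^ (-((r : ℝ) + 1) / 2)) +
          r * ((p : ℝ) - 1) * (1 - (p : ℝ) ^ (-((r : ℝ) + 1) * ((r : ℝ) - 1) / 2))) /
        (r * (p : ℝ) ^ r * (1 - (p : ℝ) ^ (-(r : ℝ) * ((r : ℝ) + 1) / 2 + 1)) *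
          (1 - (p : ℝ) ^ (-((r : ℝ) + 1) / 2))) := by
  have h0 : μ Set.univ ≠ 0 := NeZero.ne _
  have ht : μ Set.univ ≠ ⊤ := measure_ne_top _ _
  have : ((μ Set.univ)⁻¹ • μ).IsAddHaarMeasure :=
    Measure.IsAddHaarMeasure.smul μ (ENNReal.inv_ne_zero.2 ht) (ENNReal.inv_ne_top.2 h0)
  have : IsProbabilityMeasure ((μ Set.univ)⁻¹ • μ) :=
    ⟨by rw [Measure.smul_apply, smul_eq_mul, ENNReal.inv_mul_cancel h0 ht]⟩
  rw [← real_irredSet_eq ((μ Set.univ)⁻¹ • μ) hr, measureReal_ennreal_smul_apply,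
    ENNReal.toReal_inv, div_eq_inv_mul]
  rfl
end

section
/- Let p be an odd prime, ζ ∈ Z_p such that x^2 + ζ is irreducible mod p. Let f(x) = (x^2 + pαx + pβ + ζ)(x^2 - pαx + pγ + ζ) with α, β, γ ∈ Z_p. Suppose p^k divides both α and β - γ, but p^{k+1} does not divide at least one of them. Then every monic quartic g ∈ Z_p[x] with g ≡ f (mod p^{2k+3}) is reducible in Z_p[x]. -/
open Polynomial

namespace QuadraticAlgebra

variable {R : Type*} [CommRing R] {a b : R}

/-- A quadratic algebra over a ring complete for a principal ideal is complete for the extended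
ideal. -/
theorem isAdicComplete_span_algebraMap (r : R) [hR : IsAdicComplete (Ideal.span {r}) R] :
    IsAdicComplete (Ideal.span {algebraMap R (QuadraticAlgebra R a b) r})
      (QuadraticAlgebra R a b) where
  haus' x hx := by
    simp only [← Ideal.one_eq_top, smul_eq_mul, mul_one, SModEq.sub_mem, sub_zero,
      Ideal.span_singleton_pow, Ideal.mem_span_singleton, ← map_pow, algebraMap_dvd_iff] at hx
    ext
    · refine hR.haus' _ fun n => ?_
      simpa [SModEq.sub_mem, Ideal.span_singleton_pow, Ideal.mem_span_singleton] using (hx n).1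
    · refine hR.haus' _ fun n => ?_
      simpa [SModEq.sub_mem, Ideal.span_singleton_pow, Ideal.mem_span_singleton] using (hx n).2
  prec' f hf := by
    simp only [← Ideal.one_eq_top, smul_eq_mul, mul_one, SModEq.sub_mem,
      Ideal.span_singleton_pow, Ideal.mem_span_singleton, ← map_pow, algebraMap_dvd_iff,
      re_sub, im_sub] at hf ⊢
    obtain ⟨x, hx⟩ := hR.prec' (fun n => (f n).re) fun hmn => by
      simpa [SModEq.sub_mem, Ideal.span_singleton_pow, Ideal.mem_span_singleton] using (hf hmn).1
    obtain ⟨y, hy⟩ := hR.prec' (fun n => (f n).im) fun hmn => by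
      simpa [SModEq.sub_mem, Ideal.span_singleton_pow, Ideal.mem_span_singleton] using (hf hmn).2
    refine ⟨⟨x, y⟩, fun n => ⟨?_, ?_⟩⟩
    · simpa [SModEq.sub_mem, Ideal.span_singleton_pow, Ideal.mem_span_singleton] using hx n
    · simpa [SModEq.sub_mem, Ideal.span_singleton_pow, Ideal.mem_span_singleton] using hy n

theorem monic_X_sq_sub_trace_add_norm (z : QuadraticAlgebra R a b) :
    (X ^ 2 - C z.trace * X + C z.norm).Monic := by
  monicity!

theorem natDegree_X_sq_sub_trace_add_norm [Nontrivial R] (z : QuadraticAlgebra R a b) :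
    (X ^ 2 - C z.trace * X + C z.norm).natDegree = 2 := by
  compute_degree!

/-- If `1, z` is a basis, every polynomial vanishing at `z` is divisible by the characteristic
polynomial of `z`. -/
theorem X_sq_sub_trace_add_norm_dvd {z : QuadraticAlgebra R a b} (hz : IsUnit z.im) {g : R[X]}
    (hg : aeval z g = 0) : (X ^ 2 - C z.trace * X + C z.norm) ∣ g := by
  nontriviality R
  have hmonic := monic_X_sq_sub_trace_add_norm z
  have hdeg := natDegree_X_sq_sub_trace_add_norm z
  have hroot : aeval z (X ^ 2 - C z.trace * X + C z.norm) = 0 := by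
    simpa [Algebra.smul_def] using z.sq_sub_trace_smul_add_norm_eq_zero
  rw [← modByMonic_eq_zero_iff_dvd hmonic]
  have hlt : (g %ₘ (X ^ 2 - C z.trace * X + C z.norm)).natDegree ≤ 1 := by
    have := natDegree_modByMonic_lt g hmonic (by intro h; simp [h] at hdeg)
    omega
  have hrem : aeval z (g %ₘ (X ^ 2 - C z.trace * X + C z.norm)) = 0 := by
    rw [modByMonic_eq_sub_mul_div g, map_sub, map_mul, hroot, hg]
    simp
  obtain ⟨s, t, hst⟩ := exists_eq_X_add_C_of_natDegree_le_one hlt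
  rw [hst] at hrem ⊢
  have him := congrArg QuadraticAlgebra.im hrem
  have hre := congrArg QuadraticAlgebra.re hrem
  simp at him hre
  have hs : s = 0 := by simpa [hz.mul_left_eq_zero] using him
  subst hs
  simpa using hre

end QuadraticAlgebra

namespace HenselianRing

variable {R : Type*} [CommRing R] {I : Ideal R} [HenselianRing R I]

/-- A form of Hensel's lemma without monicity, obtained by reversing the polynomial. -/
theorem exists_one_add_self_add_mul_eq_zero {c : R} (hc : c ∈ I) (H : R[X]) :
    ∃ u : R, 1 + u + c * (u * H.eval u) = 0 := by
  nontriviality R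
  set m := H.natDegree with hm
  set K : R[X] := X ^ (m + 2) + (X ^ (m + 1) + C c * reflect (m + 1) H) with hK
  have hlow : (X ^ (m + 1) + C c * reflect (m + 1) H).natDegree ≤ m + 1 := by
    refine natDegree_add_le_of_degree_le (natDegree_X_pow_le _) ?_
    refine (natDegree_C_mul_le _ _).trans ((natDegree_reflect_le).trans ?_)
    simp [← hm]
  have hmonic : K.Monic := monic_X_pow_add ((degree_le_of_natDegree_le hlow).trans_lt
    (by exact_mod_cast Nat.lt_succ_self _))
  have heval : K.eval (-1) ∈ I := by
    have : K.eval (-1) = c * (reflect (m + 1) H).eval (-1) := by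
      simp [hK]; ring
    rw [this]
    exact I.mul_mem_right _ hc
  have hder : IsUnit (Ideal.Quotient.mk I (K.derivative.eval (-1))) := by
    have : K.derivative.eval (-1) =
        -(-1) ^ m + c * (derivative (reflect (m + 1) H)).eval (-1) := by
      simp [hK]; ring
    rw [this, map_add, map_mul, Ideal.Quotient.eq_zero_iff_mem.2 hc, zero_mul, add_zero]
    exact ((isUnit_one.neg.pow m).neg).map _
  obtain ⟨v, hv, hvI⟩ := is_henselian K hmonic (-1) heval hder
  have hunit : IsUnit v := by
    have := Ideal.mem_jacobson_bot.1 (HenselianRing.jac (I := I) hvI) (-1)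
    rwa [show (v - -1) * -1 + 1 = -v by ring, IsUnit.neg_iff] at this
  obtain ⟨v, rfl⟩ := hunit
  refine ⟨↑v⁻¹, ?_⟩
  have hrefl := eval₂_reflect_mul_pow (RingHom.id R) (↑v⁻¹ : R) (m + 1) H (by omega)
  simp only [invOf_units, inv_inv, eval₂_id] at hrefl
  simp only [hK, IsRoot, eval_add, eval_pow, eval_X, eval_mul, eval_C] at hv
  have hvv : (v : R) * ↑v⁻¹ = 1 := v.mul_inv
  have hpow : (v : R) ^ (m + 1) * ↑v⁻¹ ^ (m + 1) = 1 := by rw [← mul_pow, hvv, one_pow]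
  rw [← hrefl]
  linear_combination (↑v⁻¹ : R) ^ (m + 2) * hv - (v * ↑v⁻¹ + ↑v⁻¹) * hpow - hvv

/-- Hensel's lemma at a root that is not simple modulo `I`. -/
theorem exists_eval_add_mul_eq_zero (F : R[X]) {y d e w : R} (he : e ∈ I) (hw : IsUnit w)
    (hF : F.eval y = d ^ 2 * e) (hF' : F.derivative.eval y = d * w) :
    ∃ t ∈ I, F.eval (y + d * t) = 0 := by
  obtain ⟨w, rfl⟩ := hw
  set G := (taylor y F).divX.divX with hG
  have hexp (s : R) : F.eval (y + s) = F.eval y + F.derivative.eval y * s + s ^ 2 * G.eval s := by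
    have h₁ := congrArg (eval s) (divX_mul_X_add (taylor y F))
    have h₂ := congrArg (eval s) (divX_mul_X_add (taylor y F).divX)
    simp only [eval_add, eval_mul, eval_X, eval_C, coeff_divX, zero_add, taylor_coeff_zero,
      taylor_coeff_one, taylor_eval] at h₁ h₂
    rw [add_comm y s, ← h₁, ← h₂]
    ring
  have hc : (↑w⁻¹ : R) * e ∈ I := I.mul_mem_left _ he
  obtain ⟨u, hu⟩ := exists_one_add_self_add_mul_eq_zero hc
    (C (↑w⁻¹ : R) * X * G.comp (C (d * (↑w⁻¹ * e)) * X))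
  refine ⟨↑w⁻¹ * e * u, I.mul_mem_right _ hc, ?_⟩
  rw [hexp, hF, hF']
  simp only [eval_mul, eval_C, eval_X, eval_comp] at hu
  have hww : (w : R) * ↑w⁻¹ = 1 := w.mul_inv
  rw [show d * (↑w⁻¹ * e * u) = d * (↑w⁻¹ * e) * u by ring]
  linear_combination d ^ 2 * e * hu + d ^ 2 * e * u * hww

end HenselianRing

namespace PadicInt

variable {p : ℕ} [Fact p.Prime]

theorem toZMod_eq_zero_iff_dvd {x : ℤ_[p]} : toZMod x = 0 ↔ (p : ℤ_[p]) ∣ x := by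
  rw [← RingHom.mem_ker, ker_toZMod, maximalIdeal_eq_span_p, Ideal.mem_span_singleton]

theorem isUnit_iff_not_dvd {x : ℤ_[p]} : IsUnit x ↔ ¬ (p : ℤ_[p]) ∣ x := by
  rw [← Ideal.mem_span_singleton, ← maximalIdeal_eq_span_p, IsLocalRing.mem_maximalIdeal,
    mem_nonunits_iff, not_not]

theorem C_pow_dvd_sub_of_map_toZModPow_eq {n : ℕ} {f g : ℤ_[p][X]}
    (h : g.map (toZModPow n) = f.map (toZModPow n)) : C ((p : ℤ_[p]) ^ n) ∣ g - f := by
  rw [C_dvd_iff_dvd_coeff]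
  intro i
  have := congrArg (fun q => q.coeff i) h
  simp only [coeff_map] at this
  rw [← Ideal.mem_span_singleton, ← ker_toZModPow, RingHom.mem_ker, coeff_sub, map_sub, this,
    sub_self]

/-- If `x² + ζ` is irreducible mod `p`, then in a quadratic algebra given by a lift of this
polynomial everything not divisible by `p` is a unit. -/
theorem isUnit_quadraticAlgebra_of_not_dvd {ζ a b : ℤ_[p]}
    (hirr : Irreducible (X ^ 2 + C (toZMod ζ) : (ZMod p)[X]))
    (ha : toZMod a = -toZMod ζ) (hb : toZMod b = 0) {z : QuadraticAlgebra ℤ_[p] a b}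
    (hz : ¬ algebraMap ℤ_[p] (QuadraticAlgebra ℤ_[p] a b) p ∣ z) : IsUnit z := by
  rw [QuadraticAlgebra.isUnit_iff_norm_isUnit, isUnit_iff_not_dvd, ← toZMod_eq_zero_iff_dvd]
  contrapose! hz
  rw [QuadraticAlgebra.algebraMap_dvd_iff, ← toZMod_eq_zero_iff_dvd, ← toZMod_eq_zero_iff_dvd]
  simp only [QuadraticAlgebra.norm_def, map_add, map_sub, map_mul, ha, hb] at hz
  have him : toZMod z.im = 0 := by
    by_contra hne
    have hroot : IsRoot (X ^ 2 + C (toZMod ζ) : (ZMod p)[X]) (toZMod z.re / toZMod z.im) := by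
      simp only [IsRoot, eval_add, eval_pow, eval_X, eval_C]
      field_simp
      linear_combination hz
    have h₁ := degree_eq_one_of_irreducible_of_root hirr hroot
    rw [degree_X_pow_add_C two_pos] at h₁
    norm_num at h₁
  refine ⟨?_, him⟩
  simpa [him] using hz

end PadicInt

/-- Claim 1: with `x² + ζ` irreducible mod `p` and
`f = (x² + pαx + pβ + ζ)(x² - pαx + pγ + ζ)`, if `p^k` divides both `α` and `β - γ`
but `p^(k+1)` fails to divide at least one of them, then every monic quartic
`g ≡ f (mod p^(2k+3))` is reducible in `ℤ_p[x]`. -/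
theorem stmt_10 (p : ℕ) [Fact p.Prime] (hodd : p ≠ 2) (ζ α β γ : ℤ_[p]) (k : ℕ)
    (hirr : Irreducible (X ^ 2 + C (PadicInt.toZMod ζ) : Polynomial (ZMod p)))
    (hk : (p : ℤ_[p]) ^ k ∣ α ∧ (p : ℤ_[p]) ^ k ∣ (β - γ))
    (hk1 : ¬ ((p : ℤ_[p]) ^ (k + 1) ∣ α ∧ (p : ℤ_[p]) ^ (k + 1) ∣ (β - γ))) :
    ∀ g : Polynomial ℤ_[p], g.Monic → g.natDegree = 4 →
      g.map (PadicInt.toZModPow (2 * k + 3)) =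
        ((X ^ 2 + C ((p : ℤ_[p]) * α) * X + C ((p : ℤ_[p]) * β + ζ)) *
          (X ^ 2 - C ((p : ℤ_[p]) * α) * X + C ((p : ℤ_[p]) * γ + ζ))).map
            (PadicInt.toZModPow (2 * k + 3)) →
      ¬ Irreducible g := by
  intro g hg hdeg hmap hgirr
  obtain ⟨⟨α', hα⟩, ⟨δ, hδ⟩⟩ := hk
  set P : ℤ_[p] := (p : ℤ_[p]) with hP
  have hPprime : Prime P := PadicInt.prime_p
  obtain ⟨a, ha⟩ : ∃ a, a = -(P * β + ζ) := ⟨_, rfl⟩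
  obtain ⟨b, hb⟩ : ∃ b, b = -(P * α) := ⟨_, rfl⟩
  let φ : ℤ_[p] →+* QuadraticAlgebra ℤ_[p] a b := algebraMap _ _
  have hφ : algebraMap ℤ_[p] (QuadraticAlgebra ℤ_[p] a b) = φ := rfl
  have hPzero : PadicInt.toZMod P = 0 := PadicInt.toZMod_eq_zero_iff_dvd.2 dvd_rfl
  have hunit {z : QuadraticAlgebra ℤ_[p] a b} (hz : ¬ φ P ∣ z) :
      IsUnit z :=
    PadicInt.isUnit_quadraticAlgebra_of_not_dvd hirr
      (by simp [ha, hPzero]) (by simp [hb, hPzero]) hz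
  have hcomplete : IsAdicComplete (Ideal.span {P}) ℤ_[p] := by
    rw [hP, ← PadicInt.maximalIdeal_eq_span_p]
    infer_instance
  have hcompleteS :
      IsAdicComplete (Ideal.span {φ P}) (QuadraticAlgebra ℤ_[p] a b) :=
    QuadraticAlgebra.isAdicComplete_span_algebraMap P
  have htwo : ¬ P ∣ 2 := by
    rw [← PadicInt.toZMod_eq_zero_iff_dvd, map_ofNat]
    exact Ring.two_ne_zero (by rwa [ZMod.ringChar_zmod_n])
  obtain ⟨h, hh⟩ : C (P ^ (2 * k + 3)) ∣ _ := PadicInt.C_pow_dvd_sub_of_map_toZModPow_eq hmap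
  rw [sub_eq_iff_eq_add] at hh
  let ω : QuadraticAlgebra ℤ_[p] a b := ⟨0, 1⟩
  let π : QuadraticAlgebra ℤ_[p] a b := φ P
  have hπ : φ P = π := rfl
  have hω : ω ^ 2 + φ (P * α) * ω + φ (P * β + ζ) = 0 := by
    ext <;> simp [ω, φ, sq, ha, hb]
  let σ : QuadraticAlgebra ℤ_[p] a b := 2 * ω + φ (P * α)
  let τ : QuadraticAlgebra ℤ_[p] a b := -2 * φ α' * ω - φ δ
  have hσ : IsUnit σ := by
    refine hunit fun hdvd => htwo ?_
    simpa [σ, ω, φ, QuadraticAlgebra.re_ofNat, QuadraticAlgebra.im_ofNat] using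
      (QuadraticAlgebra.algebraMap_dvd_iff.1 hdvd).2
  have hτ : IsUnit τ := by
    refine hunit fun hdvd => hk1 ?_
    have hdvd' := QuadraticAlgebra.algebraMap_dvd_iff.1 hdvd
    simp [τ, ω, φ, QuadraticAlgebra.re_ofNat, QuadraticAlgebra.im_ofNat] at hdvd'
    rw [hα, hδ, pow_succ]
    exact ⟨mul_dvd_mul_left _ ((hPprime.dvd_or_dvd hdvd'.2).resolve_left htwo),
      mul_dvd_mul_left _ hdvd'.1⟩
  let w : QuadraticAlgebra ℤ_[p] a b := σ * τ + π * (π ^ (k + 1) * aeval ω (derivative h))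
  have hw : IsUnit w := by
    refine hunit fun hdvd => ?_
    have hστ : π ∣ σ * τ := (dvd_add_left (dvd_mul_right _ _)).1 hdvd
    have hπ_unit := isUnit_of_dvd_unit hστ (hσ.mul hτ)
    rw [QuadraticAlgebra.isUnit_iff_norm_isUnit, QuadraticAlgebra.norm_algebraMap] at hπ_unit
    exact hPprime.not_isUnit ((isUnit_pow_iff two_ne_zero).1 hπ_unit)
  have hα' : φ α = π ^ k * φ α' := by
    rw [hα, map_mul, map_pow]
  have hδ' : φ β - φ γ = π ^ k * φ δ := by
    rw [← map_sub, hδ, map_mul, map_pow]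
  have heval : (g.map (φ)).eval ω = (π ^ (k + 1)) ^ 2 * (π * aeval ω h) := by
    rw [eval_map_algebraMap, hh]
    simp only [map_add, map_sub, map_mul, map_pow, aeval_C, aeval_X, hφ, hπ] at hω ⊢
    linear_combination (ω ^ 2 - π * φ α * ω + (π * φ γ + φ ζ)) * hω
  have hderiv : (g.map (φ)).derivative.eval ω = π ^ (k + 1) * w := by
    rw [derivative_map, eval_map_algebraMap, hh, derivative_add, derivative_C_mul]
    simp only [derivative_mul, derivative_X_pow, derivative_C, derivative_X, map_add, map_sub,
      map_mul, map_pow, map_zero, map_one, map_natCast, aeval_C, aeval_X, hφ, hπ] at hω ⊢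
    simp only [w, σ, τ, map_mul, hπ]
    push_cast
    linear_combination (2 * ω - π * φ α + (2 * ω + π * φ α)) * hω
      - 2 * π * ω * (2 * ω + π * φ α) * hα'
      - π * (2 * ω + π * φ α) * hδ'
  obtain ⟨t, -, hroot⟩ := HenselianRing.exists_eval_add_mul_eq_zero
    (I := Ideal.span {φ P}) _
    (Ideal.mul_mem_right _ _ (Ideal.mem_span_singleton_self _)) hw heval hderiv
  rw [eval_map_algebraMap] at hroot
  set z : QuadraticAlgebra ℤ_[p] a b := ω + π ^ (k + 1) * t with hz
  have hzim : IsUnit z.im := by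
    rw [PadicInt.isUnit_iff_not_dvd]
    intro hdvd
    have hπt : P ∣ (π * (π ^ k * t)).im :=
      (QuadraticAlgebra.algebraMap_dvd_iff.1 (Dvd.intro _ rfl)).2
    rw [hz, pow_succ', mul_assoc, QuadraticAlgebra.im_add] at hdvd
    exact hPprime.not_isUnit (isUnit_of_dvd_one ((dvd_add_left hπt).1 hdvd))
  obtain ⟨q, hq⟩ := QuadraticAlgebra.X_sq_sub_trace_add_norm_dvd hzim hroot
  have hmonic := QuadraticAlgebra.monic_X_sq_sub_trace_add_norm z
  have hnat := QuadraticAlgebra.natDegree_X_sq_sub_trace_add_norm z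
  have hqmonic : q.Monic := hmonic.of_mul_monic_left (hq ▸ hg)
  have hqnat : q.natDegree = 2 := by
    have := hmonic.natDegree_mul hqmonic
    rw [← hq] at this
    omega
  rcases hgirr.isUnit_or_isUnit hq with hu | hu
  · have := natDegree_eq_zero_of_isUnit hu
    omega
  · have := natDegree_eq_zero_of_isUnit hu
    omega
end

section
/- Let p be an odd prime and ζ ∈ Z_p such that -ζ is not a square mod p. The Haar-measure proportion of monic quartic polynomials f ∈ Z_p[x] with f ≡ (x^2 + ζ)^2 (mod p) that are irreducible in Z_p[x] equals (2p^2 + 1)/(2(p^2 + 1)). -/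
open MeasureTheory Polynomial

section Algebra

variable {p : ℕ} [Fact p.Prime]

theorem PadicInt.toZMod_eq_zero_iff_dvd_s14 {x : ℤ_[p]} :
    PadicInt.toZMod x = 0 ↔ (p : ℤ_[p]) ∣ x := by
  rw [← RingHom.mem_ker, PadicInt.ker_toZMod, PadicInt.maximalIdeal_eq_span_p,
    Ideal.mem_span_singleton]

theorem PadicInt.isUnit_iff_toZMod_ne_zero {x : ℤ_[p]} :
    IsUnit x ↔ PadicInt.toZMod x ≠ 0 := by
  rw [Ne, ← RingHom.mem_ker, PadicInt.ker_toZMod, IsLocalRing.mem_maximalIdeal, mem_nonunits_iff,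
    not_not]

theorem PadicInt.toZMod_two : PadicInt.toZMod (2 : ℤ_[p]) = 2 := map_ofNat _ 2

theorem ZMod.two_ne_zero_of_odd (hodd : p ≠ 2) : (2 : ZMod p) ≠ 0 :=
  Ring.two_ne_zero (by rwa [ZMod.ringChar_zmod_n])

theorem PadicInt.isUnit_two (hodd : p ≠ 2) : IsUnit (2 : ℤ_[p]) := by
  rw [PadicInt.isUnit_iff_toZMod_ne_zero, PadicInt.toZMod_two]
  exact ZMod.two_ne_zero_of_odd hodd

/-- A perturbation of the identity of `ℤ_p²` by `p` times a nonexpansive map is surjective. -/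
theorem PadicInt.exists_add_p_smul_eq {P : ℤ_[p] × ℤ_[p] → ℤ_[p] × ℤ_[p]}
    (hP : LipschitzWith 1 P) (c : ℤ_[p] × ℤ_[p]) : ∃ x, x + (p : ℤ_[p]) • P x = c := by
  have hp := (Fact.out : p.Prime).one_lt
  have hlt : ((p : NNReal)⁻¹) < 1 := inv_lt_one_of_one_lt₀ (by exact_mod_cast hp)
  have hT : ContractingWith (p : NNReal)⁻¹ (fun x => c - (p : ℤ_[p]) • P x) := by
    refine ⟨hlt, LipschitzWith.of_dist_le_mul fun x y => ?_⟩
    have h1 := hP.dist_le_mul x y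
    rw [dist_sub_left, dist_eq_norm, ← smul_sub]
    refine (norm_smul_le _ _).trans ?_
    rw [PadicInt.norm_p, ← dist_eq_norm]
    push_cast
    gcongr
    simpa using h1
  refine ⟨hT.fixedPoint, ?_⟩
  have h := hT.fixedPoint_isFixedPt
  have h' := eq_sub_iff_add_eq.mp h.symm
  exact h'

theorem PadicInt.lipschitzWith_one_of_sub_eq {P : ℤ_[p] × ℤ_[p] → ℤ_[p] × ℤ_[p]}
    (h₁ : ∀ x y, ∃ α β, (P x).1 - (P y).1 = α * (x.1 - y.1) + β * (x.2 - y.2))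
    (h₂ : ∀ x y, ∃ α β, (P x).2 - (P y).2 = α * (x.1 - y.1) + β * (x.2 - y.2)) :
    LipschitzWith 1 P := by
  have key : ∀ (x y : ℤ_[p] × ℤ_[p]) (α β : ℤ_[p]),
      ‖α * (x.1 - y.1) + β * (x.2 - y.2)‖ ≤ dist x y := by
    intro x y α β
    refine (PadicInt.nonarchimedean _ _).trans ?_
    rw [Prod.dist_eq, dist_eq_norm, dist_eq_norm]
    refine max_le_max ?_ ?_ <;> rw [norm_mul] <;>
      exact mul_le_of_le_one_left (norm_nonneg _) (PadicInt.norm_le_one _)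
  refine LipschitzWith.of_dist_le_mul fun x y => ?_
  obtain ⟨α, β, h⟩ := h₁ x y
  obtain ⟨γ, δ, h'⟩ := h₂ x y
  rw [Prod.dist_eq (x := P x), dist_eq_norm, dist_eq_norm, h, h', NNReal.coe_one, one_mul]
  exact max_le (key _ _ _ _) (key _ _ _ _)

/-- Hensel lifting for a perturbation of squaring in `ℤ_p[x]/(x² + s x + t)`. -/
theorem PadicInt.exists_perturbed_square_eq {s t ε r₀ r₁ z₀ z₁ : ℤ_[p]}
    (hδ : IsUnit (4 * (r₀ ^ 2 - s * r₀ * r₁ + t * r₁ ^ 2))) :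
    ∃ m₀ m₁ : ℤ_[p],
      m₀ ^ 2 - t * m₁ ^ 2 - p * ε * m₁ ^ 4 = r₀ ^ 2 - t * r₁ ^ 2 - p * ε * r₁ ^ 4 + p * z₀ ∧
      2 * m₀ * m₁ - s * m₁ ^ 2 = 2 * r₀ * r₁ - s * r₁ ^ 2 + p * z₁ := by
  obtain ⟨d, hd⟩ := hδ.exists_right_inv
  let N₀ : ℤ_[p] × ℤ_[p] → ℤ_[p] := fun x => x.1 ^ 2 - t * x.2 ^ 2 -
    ε * x.2 * (4 * r₁ ^ 3 + 6 * r₁ ^ 2 * p * x.2 + 4 * r₁ * p ^ 2 * x.2 ^ 2 + p ^ 3 * x.2 ^ 3)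
  let N₁ : ℤ_[p] × ℤ_[p] → ℤ_[p] := fun x => 2 * x.1 * x.2 - s * x.2 ^ 2
  have hN₀ : ∀ x y : ℤ_[p] × ℤ_[p], ∃ α β,
      N₀ x - N₀ y = α * (x.1 - y.1) + β * (x.2 - y.2) := fun x y =>
    ⟨x.1 + y.1, -t * (x.2 + y.2) - ε * (4 * r₁ ^ 3 + 6 * r₁ ^ 2 * p * (x.2 + y.2) +
      4 * r₁ * p ^ 2 * (x.2 ^ 2 + x.2 * y.2 + y.2 ^ 2) +
      p ^ 3 * (x.2 + y.2) * (x.2 ^ 2 + y.2 ^ 2)), by simp only [N₀]; ring⟩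
  have hN₁ : ∀ x y : ℤ_[p] × ℤ_[p], ∃ α β,
      N₁ x - N₁ y = α * (x.1 - y.1) + β * (x.2 - y.2) := fun x y =>
    ⟨2 * x.2, 2 * y.1 - s * (x.2 + y.2), by simp only [N₁]; ring⟩
  have hcomb : ∀ u v : ℤ_[p], ∀ x y : ℤ_[p] × ℤ_[p], ∃ α β,
      (u * N₀ x + v * N₁ x) - (u * N₀ y + v * N₁ y) = α * (x.1 - y.1) + β * (x.2 - y.2) := by
    intro u v x y
    obtain ⟨α, β, h⟩ := hN₀ x y
    obtain ⟨γ, δ, h'⟩ := hN₁ x y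
    exact ⟨u * α + v * γ, u * β + v * δ, by linear_combination u * h + v * h'⟩
  obtain ⟨x, hx⟩ := PadicInt.exists_add_p_smul_eq
    (P := fun x => (d * (2 * r₀ - 2 * s * r₁) * N₀ x + d * (2 * t * r₁) * N₁ x,
      -d * (2 * r₁) * N₀ x + d * (2 * r₀) * N₁ x))
    (PadicInt.lipschitzWith_one_of_sub_eq (hcomb _ _) (hcomb _ _))
    (d * ((2 * r₀ - 2 * s * r₁) * z₀ + 2 * t * r₁ * z₁), d * (-2 * r₁ * z₀ + 2 * r₀ * z₁))
  have e₀ := congrArg Prod.fst hx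
  have e₁ := congrArg Prod.snd hx
  simp only [Prod.fst_add, Prod.snd_add, Prod.smul_fst, Prod.smul_snd, smul_eq_mul, N₀, N₁]
    at e₀ e₁
  refine ⟨r₀ + p * x.1, r₁ + p * x.2, ?_, ?_⟩
  · linear_combination (2 * r₀ * p) * e₀ - (2 * t * r₁ * p) * e₁ + hd * p * (z₀ - p * N₀ x)
  · linear_combination (2 * r₁ * p) * e₀ + ((2 * r₀ - 2 * s * r₁) * p) * e₁ +
      hd * p * (z₁ - p * N₁ x)


/-- The monic quartic with lower coefficients `c`. -/
local notation "quartic" c:max => (X ^ 4 + ∑ i : Fin 4, C (c i) * X ^ (i : ℕ))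

theorem quartic_eq {R : Type*} [CommRing R] (c : Fin 4 → R) :
    quartic c = X ^ 4 + C (c 3) * X ^ 3 + C (c 2) * X ^ 2 + C (c 1) * X + C (c 0) := by
  simp [Fin.sum_univ_four]
  ring

theorem quartic_coeff {R : Type*} [CommRing R] (a b c d : R) :
    (X ^ 4 + C a * X ^ 3 + C b * X ^ 2 + C c * X + C d : R[X]).coeff 3 = a ∧
    (X ^ 4 + C a * X ^ 3 + C b * X ^ 2 + C c * X + C d : R[X]).coeff 2 = b ∧
    (X ^ 4 + C a * X ^ 3 + C b * X ^ 2 + C c * X + C d : R[X]).coeff 1 = c ∧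
    (X ^ 4 + C a * X ^ 3 + C b * X ^ 2 + C c * X + C d : R[X]).coeff 0 = d := by
  refine ⟨?_, ?_, ?_, ?_⟩ <;> simp [coeff_X, coeff_C, coeff_X_pow]

theorem quartic_eq_iff {R : Type*} [CommRing R] {a b c d a' b' c' d' : R} :
    (X ^ 4 + C a * X ^ 3 + C b * X ^ 2 + C c * X + C d : R[X]) =
      X ^ 4 + C a' * X ^ 3 + C b' * X ^ 2 + C c' * X + C d' ↔
    a = a' ∧ b = b' ∧ c = c' ∧ d = d' := by
  constructor
  · intro h
    obtain ⟨h3, h2, h1, h0⟩ := quartic_coeff a b c d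
    obtain ⟨h3', h2', h1', h0'⟩ := quartic_coeff a' b' c' d'
    rw [h] at h3 h2 h1 h0
    exact ⟨h3.symm.trans h3', h2.symm.trans h2', h1.symm.trans h1', h0.symm.trans h0'⟩
  · rintro ⟨rfl, rfl, rfl, rfl⟩
    rfl

theorem quartic_map_eq_iff (c : Fin 4 → ℤ_[p]) (ζ : ZMod p) :
    (quartic c).map PadicInt.toZMod = (X ^ 2 + C ζ) ^ 2 ↔
      PadicInt.toZMod (c 3) = 0 ∧ PadicInt.toZMod (c 2) = 2 * ζ ∧
      PadicInt.toZMod (c 1) = 0 ∧ PadicInt.toZMod (c 0) = ζ ^ 2 := by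
  rw [quartic_eq, ← quartic_eq_iff]
  simp only [Polynomial.map_add, Polynomial.map_mul, Polynomial.map_pow, map_X, map_C]
  have : (X ^ 2 + C ζ : (ZMod p)[X]) ^ 2 =
      X ^ 4 + C 0 * X ^ 3 + C (2 * ζ) * X ^ 2 + C 0 * X + C (ζ ^ 2) := by
    simp only [map_mul, map_pow, map_ofNat, map_zero]
    ring
  rw [this]

theorem irreducible_X_sq_add_C {K : Type*} [Field K] {ζ : K} (hζ : ¬ ∃ t : K, t ^ 2 = -ζ) :
    Irreducible (X ^ 2 + C ζ) := by
  have hm : (X ^ 2 + C ζ).Monic := monic_X_pow_add_C _ two_ne_zero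
  have hd : (X ^ 2 + C ζ).natDegree = 2 := natDegree_X_pow_add_C
  refine (hm.irreducible_iff_roots_eq_zero_of_degree_le_three (by omega) (by omega)).mpr ?_
  refine Multiset.eq_zero_of_forall_notMem fun t ht => hζ ⟨t, ?_⟩
  have := (mem_roots'.mp ht).2
  simp only [IsRoot.def, eval_add, eval_pow, eval_X, eval_C] at this
  exact eq_neg_of_add_eq_zero_left this

theorem Polynomial.Monic.eq_quadratic {R : Type*} [CommRing R] {g : R[X]} (hg : g.Monic)
    (hd : g.natDegree = 2) : g = X ^ 2 + C (g.coeff 1) * X + C (g.coeff 0) := by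
  conv_lhs => rw [hg.as_sum, hd]
  simp [Finset.sum_range_succ]
  ring

theorem quadratic_mul_quadratic {R : Type*} [CommRing R] (a b c d : R) :
    (X ^ 2 + C a * X + C b) * (X ^ 2 + C c * X + C d) =
      X ^ 4 + C (a + c) * X ^ 3 + C (b + d + a * c) * X ^ 2 + C (a * d + b * c) * X +
        C (b * d) := by
  simp only [map_add, map_mul]
  ring

/-- A factor of degree two of a monic polynomial that reduces to the square of an irreducible
quadratic reduces to that quadratic. -/
theorem eq_and_eq_of_mul_eq_sq {K : Type*} [Field K] {q g h : K[X]} (hq : Irreducible q)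
    (hqm : q.Monic) (hg : g.Monic) (hh : h.Monic) (hdg : g.natDegree = q.natDegree)
    (hdh : h.natDegree = q.natDegree) (hgh : g * h = q ^ 2) : g = q ∧ h = q := by
  rcases hq.prime.dvd_or_dvd (hgh ▸ dvd_pow_self q two_ne_zero : q ∣ g * h) with H | H
  · have e : g = q := (eq_of_monic_of_dvd_of_natDegree_le hqm hg H hdg.le).symm ▸ rfl
    refine ⟨e, ?_⟩
    rw [e, sq] at hgh
    exact mul_left_cancel₀ hq.ne_zero hgh
  · have e : h = q := (eq_of_monic_of_dvd_of_natDegree_le hqm hh H hdh.le).symm ▸ rfl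
    refine ⟨?_, e⟩
    rw [e, sq] at hgh
    exact mul_right_cancel₀ hq.ne_zero hgh

theorem quartic_not_irreducible_iff {ζ : ZMod p} (hζ : ¬ ∃ t : ZMod p, t ^ 2 = -ζ)
    {c : Fin 4 → ℤ_[p]} (hc : (quartic c).map PadicInt.toZMod = (X ^ 2 + C ζ) ^ 2) :
    ¬ Irreducible (quartic c) ↔ ∃ a b a' b' : ℤ_[p],
      (PadicInt.toZMod a = 0 ∧ PadicInt.toZMod a' = 0 ∧
        PadicInt.toZMod b = ζ ∧ PadicInt.toZMod b' = ζ) ∧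
      c 3 = a + a' ∧ c 2 = b + b' + a * a' ∧ c 1 = a * b' + b * a' ∧ c 0 = b * b' := by
  have hd : (quartic c).natDegree = 4 := by
    rw [quartic_eq]; compute_degree!
  have hm : (quartic c).Monic := by
    rw [Monic, leadingCoeff, hd, quartic_eq]; compute_degree!
  have hq := irreducible_X_sq_add_C hζ
  have hqm : (X ^ 2 + C ζ).Monic := monic_X_pow_add_C _ two_ne_zero
  have hqd : (X ^ 2 + C ζ).natDegree = 2 := natDegree_X_pow_add_C
  constructor
  · intro hirr
    rw [hm.irreducible_iff_natDegree'] at hirr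
    have h1 : (quartic c) ≠ 1 := by
      intro h; rw [h, natDegree_one] at hd; omega
    push Not at hirr
    obtain ⟨g, h, hg, hh, hgh, hdeg⟩ := hirr h1
    rw [hd, Finset.mem_Ioc] at hdeg
    have hsum : g.natDegree + h.natDegree = 4 := by rw [← hg.natDegree_mul hh, hgh, hd]
    have hmap : g.map PadicInt.toZMod * h.map PadicInt.toZMod = (X ^ 2 + C ζ) ^ 2 := by
      rw [← Polynomial.map_mul, hgh, hc]
    have hh2 : h.natDegree = 2 := by
      by_contra hne
      have hh1 : h.natDegree = 1 := by omega
      have hdvd : h.map PadicInt.toZMod ∣ (X ^ 2 + C ζ) ^ 2 := ⟨_, by rw [← hmap, mul_comm]⟩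
      have hh1' : (h.map (PadicInt.toZMod (p := p))).natDegree = 1 := by
        rw [hh.natDegree_map, hh1]
      have hirr1 : Irreducible (h.map (PadicInt.toZMod (p := p))) :=
        irreducible_of_degree_eq_one ((degree_eq_iff_natDegree_eq_of_pos one_pos).mpr hh1')
      have := hirr1.prime.dvd_of_dvd_pow hdvd
      have := natDegree_eq_of_degree_eq
        (degree_eq_degree_of_associated (hirr1.associated_of_dvd hq this))
      omega
    obtain ⟨eg, eh⟩ := eq_and_eq_of_mul_eq_sq hq hqm (hg.map _) (hh.map _)
      (by rw [hg.natDegree_map]; omega) (by rw [hh.natDegree_map]; omega) hmap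
    rw [hg.eq_quadratic (by omega), hh.eq_quadratic (by omega), quadratic_mul_quadratic,
      quartic_eq, quartic_eq_iff] at hgh
    refine ⟨g.coeff 1, g.coeff 0, h.coeff 1, h.coeff 0, ⟨?_, ?_, ?_, ?_⟩,
      hgh.1.symm, hgh.2.1.symm, hgh.2.2.1.symm, hgh.2.2.2.symm⟩
    · rw [← coeff_map, eg]; simp
    · rw [← coeff_map, eh]; simp
    · rw [← coeff_map, eg]; simp
    · rw [← coeff_map, eh]; simp
  · rintro ⟨a, b, a', b', -, h3, h2, h1, h0⟩ hirr
    have hf : (quartic c) = (X ^ 2 + C a * X + C b) * (X ^ 2 + C a' * X + C b') := by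
      rw [quadratic_mul_quadratic, quartic_eq, h3, h2, h1, h0]
    have hnu : ∀ u v : ℤ_[p], ¬ IsUnit (X ^ 2 + C u * X + C v) := by
      intro u v hu
      have := natDegree_eq_zero_of_isUnit hu
      have h2 : (X ^ 2 + C u * X + C v).natDegree = 2 := by compute_degree!
      omega
    rcases hirr.isUnit_or_isUnit hf with hu | hu <;> exact hnu _ _ hu

/-- The reducible quartics `(x² + s x + t)² + w₁ x + w₀` are those for which `-w` is a perturbed
square. -/
theorem exists_factor_coeffs_iff (hodd : p ≠ 2) {ζ : ZMod p} {s t w₀ w₁ ε : ℤ_[p]}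
    (hε : 4 * ε = 1) :
    (∃ a b a' b' : ℤ_[p],
      (PadicInt.toZMod a = 0 ∧ PadicInt.toZMod a' = 0 ∧
        PadicInt.toZMod b = ζ ∧ PadicInt.toZMod b' = ζ) ∧
      2 * s = a + a' ∧ s ^ 2 + 2 * t = b + b' + a * a' ∧ 2 * s * t + w₁ = a * b' + b * a' ∧
        t ^ 2 + w₀ = b * b') ↔
    PadicInt.toZMod s = 0 ∧ PadicInt.toZMod t = ζ ∧
    ∃ n₀ n₁ : ℤ_[p], (PadicInt.toZMod n₀ = 0 ∧ PadicInt.toZMod n₁ = 0) ∧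
      -w₀ = n₀ ^ 2 - t * n₁ ^ 2 - ε * n₁ ^ 4 ∧ -w₁ = 2 * n₀ * n₁ - s * n₁ ^ 2 := by
  have h2 := ZMod.two_ne_zero_of_odd hodd
  constructor
  · rintro ⟨a, b, a', b', ⟨ha, ha', hb, hb'⟩, e3, e2, e1, e0⟩
    have zs : PadicInt.toZMod s = 0 := by
      have := congrArg PadicInt.toZMod e3
      simp only [map_mul, map_ofNat, map_add, ha, ha', add_zero] at this
      simpa [h2] using this
    have zt : PadicInt.toZMod t = ζ := by
      have := congrArg PadicInt.toZMod e2
      simp only [map_mul, map_pow, map_ofNat, map_add, ha, ha', hb, hb', zs] at this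
      refine mul_left_cancel₀ h2 ?_
      linear_combination this
    have hs : s = 2 * ε * (a + a') := by linear_combination 2 * ε * e3 - s * hε
    obtain ⟨n₁, hn₁⟩ : ∃ n₁, n₁ = 2 * ε * (a - a') := ⟨_, rfl⟩
    obtain ⟨n₀, hn₀⟩ : ∃ n₀, n₀ = 2 * ε * (b - b') := ⟨_, rfl⟩
    have ea : a = s + n₁ := by linear_combination -hs - hn₁ - a * hε
    have ea' : a' = s - n₁ := by linear_combination -hs + hn₁ - a' * hε
    have eb : b = t + 2 * ε * n₁ ^ 2 + n₀ := by
      rw [ea, ea'] at e2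
      linear_combination -2 * ε * e2 - hn₀ + (t - b) * hε
    have eb' : b' = t + 2 * ε * n₁ ^ 2 - n₀ := by
      rw [ea, ea'] at e2
      linear_combination -2 * ε * e2 + hn₀ + (t - b') * hε
    refine ⟨zs, zt, n₀, n₁, ⟨by simp [hn₀, hb, hb'], by simp [hn₁, ha, ha']⟩, ?_, ?_⟩
    · rw [eb, eb'] at e0
      linear_combination -e0 - (t * n₁ ^ 2 + ε * n₁ ^ 4) * hε
    · rw [ea, ea', eb, eb'] at e1
      linear_combination -e1 - s * n₁ ^ 2 * hε
  · rintro ⟨zs, zt, n₀, n₁, ⟨hn₀, hn₁⟩, e0, e1⟩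
    refine ⟨s + n₁, t + 2 * ε * n₁ ^ 2 + n₀, s - n₁, t + 2 * ε * n₁ ^ 2 - n₀,
      ⟨?_, ?_, ?_, ?_⟩, ?_, ?_, ?_, ?_⟩
    · simp [zs, hn₁]
    · simp [zs, hn₁]
    · simp [zt, hn₀, hn₁]
    · simp [zt, hn₀, hn₁]
    · ring
    · linear_combination -n₁ ^ 2 * hε
    · linear_combination -e1 - s * n₁ ^ 2 * hε
    · linear_combination -e0 - (t * n₁ ^ 2 + ε * n₁ ^ 4) * hε

/-- Coordinatewise reduction modulo `p`. -/
noncomputable def PadicInt.residuePair (p : ℕ) [Fact p.Prime] :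
    ℤ_[p] × ℤ_[p] →+* ZMod p × ZMod p :=
  RingHom.prodMap PadicInt.toZMod PadicInt.toZMod

theorem PadicInt.residuePair_apply (x : ℤ_[p] × ℤ_[p]) :
    PadicInt.residuePair p x = (PadicInt.toZMod x.1, PadicInt.toZMod x.2) := rfl

theorem PadicInt.residuePair_surjective : Function.Surjective (PadicInt.residuePair p) := by
  change Function.Surjective (Prod.map PadicInt.toZMod PadicInt.toZMod)
  exact Function.Surjective.prodMap (ZMod.ringHom_surjective _) (ZMod.ringHom_surjective _)

theorem PadicInt.residuePair_eq_zero_iff {x : ℤ_[p] × ℤ_[p]} :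
    PadicInt.residuePair p x = 0 ↔ ∃ y, x = (p : ℤ_[p]) • y := by
  rw [PadicInt.residuePair_apply, Prod.mk_eq_zero, PadicInt.toZMod_eq_zero_iff_dvd_s14,
    PadicInt.toZMod_eq_zero_iff_dvd_s14]
  constructor
  · rintro ⟨⟨a, ha⟩, ⟨b, hb⟩⟩
    exact ⟨(a, b), Prod.ext ha hb⟩
  · rintro ⟨y, rfl⟩
    exact ⟨⟨y.1, rfl⟩, ⟨y.2, rfl⟩⟩

/-- The negatives of the nonzero squares of `𝔽_p[x]/(x² + ζ)`, in coordinates. -/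
def negSquares (ζ : ZMod p) : Set (ZMod p × ZMod p) :=
  {y | ∃ r : ZMod p × ZMod p, r ≠ 0 ∧ -y.1 = r.1 ^ 2 - ζ * r.2 ^ 2 ∧ -y.2 = 2 * r.1 * r.2}

/-- The vectors of positive even valuation whose leading coefficient lies in `negSquares ζ`. -/
def evenValuationSquares (ζ : ZMod p) : Set (ℤ_[p] × ℤ_[p]) :=
  {w | ∃ (k : ℕ) (y : ℤ_[p] × ℤ_[p]),
    PadicInt.residuePair p y ∈ negSquares ζ ∧ w = (p : ℤ_[p]) ^ (2 * (k + 1)) • y}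

theorem PadicInt.exists_eq_p_pow_smul {n : ℤ_[p] × ℤ_[p]} (hn : n ≠ 0) :
    ∃ (k : ℕ) (m : ℤ_[p] × ℤ_[p]), PadicInt.residuePair p m ≠ 0 ∧ n = (p : ℤ_[p]) ^ k • m := by
  have hex : ∃ k : ℕ, ¬ ∃ m, n = (p : ℤ_[p]) ^ (k + 1) • m := by
    have hfin : ∀ x : ℤ_[p], x ≠ 0 → ∃ k : ℕ, ¬ (p : ℤ_[p]) ^ (k + 1) ∣ x := fun x hx =>
      FiniteMultiplicity.of_not_isUnit PadicInt.prime_p.not_isUnit hx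
    by_cases h : n.1 = 0
    · obtain ⟨k, hk⟩ := hfin n.2 fun h' => hn (Prod.ext h h')
      exact ⟨k, fun ⟨m, hm⟩ => hk ⟨m.2, congrArg Prod.snd hm⟩⟩
    · obtain ⟨k, hk⟩ := hfin n.1 h
      exact ⟨k, fun ⟨m, hm⟩ => hk ⟨m.1, congrArg Prod.fst hm⟩⟩
  classical
  obtain ⟨m, hm⟩ : ∃ m, n = (p : ℤ_[p]) ^ Nat.find hex • m := by
    rcases h : Nat.find hex with _ | j
    · exact ⟨n, by simp⟩
    · exact not_not.mp (Nat.find_min hex (m := j) (by omega))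
  refine ⟨Nat.find hex, m, fun h0 => ?_, hm⟩
  obtain ⟨y, rfl⟩ := PadicInt.residuePair_eq_zero_iff.mp h0
  exact Nat.find_spec hex ⟨y, by rw [pow_succ, mul_smul, ← hm]⟩

theorem sq_add_mul_sq_ne_zero {K : Type*} [Field K] {ζ : K} (hζ : ¬ ∃ t : K, t ^ 2 = -ζ)
    {r : K × K} (hr : r ≠ 0) : r.1 ^ 2 + ζ * r.2 ^ 2 ≠ 0 := by
  intro h
  by_cases h2 : r.2 = 0
  · rw [h2] at h
    exact hr (Prod.ext (by simpa using h) h2)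
  · refine hζ ⟨r.1 / r.2, ?_⟩
    field_simp
    linear_combination h

theorem exists_perturbed_square_iff (hodd : p ≠ 2) {ζ : ZMod p}
    (hζ : ¬ ∃ t : ZMod p, t ^ 2 = -ζ) {s t ε : ℤ_[p]} (hs : PadicInt.toZMod s = 0)
    (ht : PadicInt.toZMod t = ζ) (w : ℤ_[p] × ℤ_[p]) :
    (∃ n₀ n₁ : ℤ_[p], (PadicInt.toZMod n₀ = 0 ∧ PadicInt.toZMod n₁ = 0) ∧
      -w.1 = n₀ ^ 2 - t * n₁ ^ 2 - ε * n₁ ^ 4 ∧ -w.2 = 2 * n₀ * n₁ - s * n₁ ^ 2) ↔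
    w = 0 ∨ w ∈ evenValuationSquares ζ := by
  constructor
  · rintro ⟨n₀, n₁, hn, e0, e1⟩
    by_cases h0 : (n₀, n₁) = (0 : ℤ_[p] × ℤ_[p])
    · obtain ⟨rfl, rfl⟩ := Prod.mk_eq_zero.mp h0
      left
      exact Prod.ext (by simpa using e0) (by simpa using e1)
    right
    obtain ⟨k, m, hm, hnm⟩ := PadicInt.exists_eq_p_pow_smul h0
    obtain ⟨m₀, m₁⟩ := m
    obtain ⟨rfl, rfl⟩ := Prod.mk.inj hnm
    rcases k with _ | k
    · refine absurd ?_ hm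
      rw [PadicInt.residuePair_apply]
      simpa using hn
    simp only [smul_eq_mul] at e0 e1
    refine ⟨k, (-(m₀ ^ 2 - t * m₁ ^ 2 - ε * p ^ (2 * (k + 1)) * m₁ ^ 4),
      -(2 * m₀ * m₁ - s * m₁ ^ 2)), ⟨_, hm, ?_, ?_⟩, Prod.ext ?_ ?_⟩
    · simp [PadicInt.residuePair_apply, ht]
    · simp [PadicInt.residuePair_apply, PadicInt.toZMod_two, hs]
    · simp only [Prod.smul_fst, smul_eq_mul]
      linear_combination -e0
    · simp only [Prod.smul_snd, smul_eq_mul]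
      linear_combination -e1
  · rintro (rfl | ⟨k, y, ⟨r, hr, hy0, hy1⟩, rfl⟩)
    · exact ⟨0, 0, by simp⟩
    obtain ⟨ρ, rfl⟩ := PadicInt.residuePair_surjective r
    have hres : PadicInt.residuePair p (-y - (ρ.1 ^ 2 - t * ρ.2 ^ 2 -
        p * (ε * p ^ (2 * k + 1)) * ρ.2 ^ 4, 2 * ρ.1 * ρ.2 - s * ρ.2 ^ 2)) = 0 := by
      simp only [PadicInt.residuePair_apply] at hy0 hy1 ⊢
      simp [hy0, hy1, ht, hs, PadicInt.toZMod_two]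
    obtain ⟨z, hz⟩ := PadicInt.residuePair_eq_zero_iff.mp hres
    have hδ : IsUnit (4 * (ρ.1 ^ 2 - s * ρ.1 * ρ.2 + t * ρ.2 ^ 2)) := by
      refine IsUnit.mul ?_ ?_
      · have := (PadicInt.isUnit_two hodd).pow 2
        norm_num at this
        exact this
      · rw [PadicInt.isUnit_iff_toZMod_ne_zero]
        simpa [hs, ht, PadicInt.residuePair_apply] using sq_add_mul_sq_ne_zero hζ hr
    obtain ⟨m₀, m₁, h0, h1⟩ := PadicInt.exists_perturbed_square_eq
      (ε := ε * (p : ℤ_[p]) ^ (2 * k + 1)) (z₀ := z.1) (z₁ := z.2) hδ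
    have hz0 := congrArg Prod.fst hz
    have hz1 := congrArg Prod.snd hz
    simp only [Prod.fst_sub, Prod.snd_sub, Prod.fst_neg, Prod.snd_neg, Prod.smul_fst,
      Prod.smul_snd, smul_eq_mul] at hz0 hz1 ⊢
    refine ⟨p ^ (k + 1) * m₀, p ^ (k + 1) * m₁, ⟨by simp, by simp⟩, ?_, ?_⟩
    · linear_combination p ^ (2 * (k + 1)) * (hz0 - h0)
    · linear_combination p ^ (2 * (k + 1)) * (hz1 - h1)

/-- In the residue class of `(x² + ζ)²`, reducibility is detected by the remainder after completing
the square. -/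
theorem quartic_not_irreducible_iff_mem (hodd : p ≠ 2) {ζ : ZMod p}
    (hζ : ¬ ∃ t : ZMod p, t ^ 2 = -ζ) {c : Fin 4 → ℤ_[p]} {s t : ℤ_[p]} (hs : c 3 = 2 * s)
    (ht : c 2 = s ^ 2 + 2 * t)
    (hc : (quartic c).map PadicInt.toZMod = (X ^ 2 + C ζ) ^ 2) :
    ¬ Irreducible (quartic c) ↔
      (c 0 - t ^ 2, c 1 - 2 * s * t) = (0 : ℤ_[p] × ℤ_[p]) ∨
      (c 0 - t ^ 2, c 1 - 2 * s * t) ∈ evenValuationSquares ζ := by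
  obtain ⟨ε, hε⟩ : ∃ ε : ℤ_[p], 4 * ε = 1 := by
    have := (PadicInt.isUnit_two (p := p) hodd).pow 2
    norm_num at this
    exact this.exists_right_inv
  have h2 := ZMod.two_ne_zero_of_odd hodd
  obtain ⟨h3, h2c, -, -⟩ := (quartic_map_eq_iff c ζ).mp hc
  have zs : PadicInt.toZMod s = 0 := by simpa [hs, h2, PadicInt.toZMod_two] using h3
  have zt : PadicInt.toZMod t = ζ := by
    refine mul_left_cancel₀ h2 ?_
    rw [← h2c, ht]
    simp [zs, PadicInt.toZMod_two]
  rw [quartic_not_irreducible_iff hζ hc, ← exists_perturbed_square_iff hodd hζ (ε := ε) zs zt]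
  have := exists_factor_coeffs_iff hodd (ζ := ζ) (s := s) (t := t) (w₀ := c 0 - t ^ 2)
    (w₁ := c 1 - 2 * s * t) hε
  simpa [zs, zt, hs, ht] using this

end Algebra

section Counting

variable {p : ℕ} [Fact p.Prime]

theorem eq_or_eq_neg_of_square_eq {K : Type*} [Field K] {ζ : K} (hζ : ¬ ∃ t : K, t ^ 2 = -ζ)
    {r s : K × K} (h₀ : s.1 ^ 2 - ζ * s.2 ^ 2 = r.1 ^ 2 - ζ * r.2 ^ 2)
    (h₁ : 2 * s.1 * s.2 = 2 * r.1 * r.2) : s = r ∨ s = -r := by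
  by_cases hv : s + r = 0
  · exact Or.inr (eq_neg_of_add_eq_zero_left hv)
  have hN := sq_add_mul_sq_ne_zero hζ hv
  simp only [Prod.fst_add, Prod.snd_add] at hN
  left
  refine Prod.ext (sub_eq_zero.mp ?_) (sub_eq_zero.mp ?_)
  · refine (mul_eq_zero.mp ?_).resolve_right hN
    linear_combination (s.1 + r.1) * h₀ + ζ * (s.2 + r.2) * h₁
  · refine (mul_eq_zero.mp ?_).resolve_right hN
    linear_combination -(s.2 + r.2) * h₀ + (s.1 + r.1) * h₁

theorem two_mul_ncard_negSquares_add_one (hodd : p ≠ 2) {ζ : ZMod p}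
    (hζ : ¬ ∃ t : ZMod p, t ^ 2 = -ζ) : 2 * (negSquares ζ).ncard + 1 = p ^ 2 := by
  classical
  have h2 := ZMod.two_ne_zero_of_odd hodd
  let φ : ZMod p × ZMod p → ZMod p × ZMod p := fun r =>
    (-(r.1 ^ 2 - ζ * r.2 ^ 2), -(2 * r.1 * r.2))
  let N : Finset (ZMod p × ZMod p) := Finset.univ.erase 0
  have himg : negSquares ζ = (N.image φ : Finset _) := by
    ext y
    simp only [negSquares, Set.mem_ofPred_eq, Finset.coe_image, Set.mem_image, Finset.mem_coe, N,
      Finset.mem_erase, Finset.mem_univ, and_true, φ, Prod.ext_iff (y := y), neg_eq_iff_eq_neg]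
    exact exists_congr fun r => by grind
  have hfib : ∀ y ∈ N.image φ, (N.filter (φ · = y)).card = 2 := by
    intro y hy
    obtain ⟨r, hr, rfl⟩ := Finset.mem_image.mp hy
    have hr0 : r ≠ 0 := Finset.ne_of_mem_erase hr
    have hne : r ≠ -r := by
      intro h
      refine hr0 ?_
      have h₁ := congrArg Prod.fst h
      have h₂ := congrArg Prod.snd h
      simp only [Prod.fst_neg, Prod.snd_neg] at h₁ h₂
      refine Prod.ext ((mul_eq_zero.mp ?_).resolve_left h2) ((mul_eq_zero.mp ?_).resolve_left h2)
      · linear_combination h₁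
      · linear_combination h₂
    have : N.filter (φ · = φ r) = {r, -r} := by
      ext s
      simp only [Finset.mem_filter, Finset.mem_insert, Finset.mem_singleton]
      constructor
      · rintro ⟨-, hs⟩
        have h₁ := congrArg Prod.fst hs
        have h₂ := congrArg Prod.snd hs
        exact eq_or_eq_neg_of_square_eq hζ (neg_injective h₁) (neg_injective h₂)
      · rintro (rfl | rfl)
        · exact ⟨hr, rfl⟩
        · exact ⟨by simpa [N] using hr0, by simp [φ]⟩
    rw [this, Finset.card_pair hne]
  have hN : N.card + 1 = p ^ 2 := by
    rw [Finset.card_erase_add_one (Finset.mem_univ _), Finset.card_univ, Fintype.card_prod,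
      ZMod.card, sq]
  rw [himg, Set.ncard_coe_finset, ← hN, Finset.card_eq_sum_card_image φ N,
    Finset.sum_congr rfl hfib, Finset.sum_const, smul_eq_mul, mul_comm]

end Counting

section Measure

variable {p : ℕ} [Fact p.Prime]

theorem PadicInt.isOpen_residuePair_eq_zero :
    IsOpen {x : ℤ_[p] × ℤ_[p] | PadicInt.residuePair p x = 0} := by
  have : {x : ℤ_[p] × ℤ_[p] | PadicInt.residuePair p x = 0} = Metric.ball 0 1 := by
    ext x
    rw [Set.mem_ofPred_eq, PadicInt.residuePair_apply, Prod.mk_eq_zero,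
      PadicInt.toZMod_eq_zero_iff_dvd_s14, PadicInt.toZMod_eq_zero_iff_dvd_s14,
      ← PadicInt.norm_lt_one_iff_dvd, ← PadicInt.norm_lt_one_iff_dvd, mem_ball_zero_iff,
      Prod.norm_def, max_lt_iff]
  rw [this]
  exact Metric.isOpen_ball

theorem PadicInt.residuePair_preimage_singleton (a : ℤ_[p] × ℤ_[p]) :
    PadicInt.residuePair p ⁻¹' {PadicInt.residuePair p a} =
      (fun x => x + -a) ⁻¹' {x | PadicInt.residuePair p x = 0} := by
  ext x
  simp [← sub_eq_add_neg, sub_eq_zero]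

theorem PadicInt.isOpen_residuePair_preimage (T : Set (ZMod p × ZMod p)) :
    IsOpen (PadicInt.residuePair p ⁻¹' T) := by
  rw [← Set.biUnion_preimage_singleton]
  refine isOpen_biUnion fun t _ => ?_
  obtain ⟨a, rfl⟩ := PadicInt.residuePair_surjective t
  rw [PadicInt.residuePair_preimage_singleton]
  exact PadicInt.isOpen_residuePair_eq_zero.preimage (by fun_prop)

variable (ρ : Measure (ℤ_[p] × ℤ_[p])) [ρ.IsAddHaarMeasure]

theorem PadicInt.measure_residuePair_preimage (T : Set (ZMod p × ZMod p)) :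
    ρ (PadicInt.residuePair p ⁻¹' T) =
      T.ncard * ρ {x | PadicInt.residuePair p x = 0} := by
  classical
  have hT : T = (T.toFinite.toFinset : Set _) := by simp
  rw [hT, Set.ncard_coe_finset]
  generalize T.toFinite.toFinset = F
  rw [← Set.biUnion_preimage_singleton]
  simp only [Finset.mem_coe]
  rw [measure_biUnion_finset]
  · rw [Finset.sum_congr rfl (g := fun _ => ρ {x | PadicInt.residuePair p x = 0})]
    · simp
    · intro t _
      obtain ⟨a, rfl⟩ := PadicInt.residuePair_surjective t
      rw [PadicInt.residuePair_preimage_singleton, measure_preimage_add_right]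
  · intro s _ t _ hst
    exact Set.disjoint_left.mpr fun x hs ht => hst (hs.symm.trans ht)
  · exact fun t _ => (PadicInt.isOpen_residuePair_preimage _).measurableSet

theorem PadicInt.range_p_smul :
    Set.range (fun x : ℤ_[p] × ℤ_[p] => (p : ℤ_[p]) • x) =
      {x | PadicInt.residuePair p x = 0} := by
  ext x
  rw [Set.mem_ofPred_eq, PadicInt.residuePair_eq_zero_iff]
  exact exists_congr fun y => eq_comm

theorem PadicInt.isOpenEmbedding_p_smul :
    Topology.IsOpenEmbedding (fun x : ℤ_[p] × ℤ_[p] => (p : ℤ_[p]) • x) := by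
  have hp : (p : ℤ_[p]) ≠ 0 := PadicInt.prime_p.ne_zero
  refine ⟨(Continuous.isClosedEmbedding (by fun_prop) fun x y h => ?_).isEmbedding, ?_⟩
  · exact Prod.ext (mul_left_cancel₀ hp (congrArg Prod.fst h))
      (mul_left_cancel₀ hp (congrArg Prod.snd h))
  · rw [PadicInt.range_p_smul]
    exact PadicInt.isOpen_residuePair_eq_zero

theorem PadicInt.measure_p_smul_image (E : Set (ℤ_[p] × ℤ_[p])) :
    (p : ENNReal) ^ 2 * ρ ((fun x => (p : ℤ_[p]) • x) '' E) = ρ E := by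
  have hemb := PadicInt.isOpenEmbedding_p_smul (p := p)
  let f : ℤ_[p] × ℤ_[p] →+ ℤ_[p] × ℤ_[p] := DistribSMul.toAddMonoidHom _ (p : ℤ_[p])
  have hf : Topology.IsOpenEmbedding f := hemb
  have := Measure.IsAddHaarMeasure.comap (mH := inferInstance) ρ hf
  have hc := Measure.isAddLeftInvariant_eq_smul (ρ.comap f) ρ
  have hE : ∀ E, ρ (f '' E) = Measure.addHaarScalarFactor (ρ.comap f) ρ * ρ E := by
    intro E
    rw [← hf.measurableEmbedding.comap_apply]
    conv_lhs => rw [hc]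
    rw [Measure.smul_apply, ENNReal.smul_def, smul_eq_mul]
  generalize Measure.addHaarScalarFactor (ρ.comap f) ρ = κ at hE
  have huniv := hE Set.univ
  have hH : ρ (f '' Set.univ) = ρ {x | PadicInt.residuePair p x = 0} := by
    rw [Set.image_univ, ← PadicInt.range_p_smul]
    rfl
  have hcard := PadicInt.measure_residuePair_preimage ρ Set.univ
  rw [Set.preimage_univ, ← hH, Set.ncard_univ, Nat.card_prod, Nat.card_zmod] at hcard
  have hone : (p : ENNReal) ^ 2 * κ = 1 := by
    have h0 : ρ Set.univ ≠ 0 := NeZero.ne _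
    rw [← ENNReal.mul_left_inj h0 (measure_ne_top ρ _), one_mul, mul_assoc, ← huniv]
    conv_rhs => rw [hcard]
    push_cast
    rw [sq]
  change _ * ρ (f '' E) = _
  rw [hE, ← mul_assoc, hone, one_mul]

theorem isOpen_evenValuationSquares (ζ : ZMod p) : IsOpen (evenValuationSquares ζ) := by
  have : evenValuationSquares ζ = ⋃ k : ℕ,
      (fun x => (p : ℤ_[p]) • x)^[2 * (k + 1)] '' (PadicInt.residuePair p ⁻¹' negSquares ζ) := by
    ext w
    simp only [evenValuationSquares, Set.mem_ofPred_eq, Set.mem_iUnion, Set.mem_image,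
      smul_iterate, Set.mem_preimage]
    exact exists_congr fun k => exists_congr fun y => and_congr_right fun _ => eq_comm
  have hopen : ∀ n : ℕ, IsOpenMap (fun x : ℤ_[p] × ℤ_[p] => (p : ℤ_[p]) • x)^[n] := by
    intro n
    induction n with
    | zero => exact IsOpenMap.id
    | succ n ih => exact ih.comp PadicInt.isOpenEmbedding_p_smul.isOpenMap
  rw [this]
  exact isOpen_iUnion fun k => hopen _ _ (PadicInt.isOpen_residuePair_preimage _)

theorem evenValuationSquares_eq_image (ζ : ZMod p) :
    evenValuationSquares ζ = (fun x => (p : ℤ_[p]) • x) '' ((fun x => (p : ℤ_[p]) • x) ''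
      (PadicInt.residuePair p ⁻¹' negSquares ζ ∪ evenValuationSquares ζ)) := by
  rw [Set.image_image]
  ext w
  constructor
  · rintro ⟨_ | k, y, hy, rfl⟩
    · exact ⟨y, Or.inl hy, by simp [← mul_smul, sq]⟩
    · exact ⟨_, Or.inr ⟨k, y, hy, rfl⟩, by simp only [← mul_smul]; congr 1; ring⟩
  · rintro ⟨_, hy | ⟨k, y, hy, rfl⟩, rfl⟩
    · exact ⟨0, _, hy, by simp [← mul_smul, sq]⟩
    · exact ⟨k + 1, y, hy, by simp only [← mul_smul]; congr 1; ring⟩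

theorem evenValuationSquares_subset (ζ : ZMod p) :
    evenValuationSquares ζ ⊆ {x | PadicInt.residuePair p x = 0} := by
  rintro _ ⟨k, y, -, rfl⟩
  refine PadicInt.residuePair_eq_zero_iff.mpr ⟨(p : ℤ_[p]) ^ (2 * k + 1) • y, ?_⟩
  rw [← mul_smul]
  congr 1
  ring

theorem zero_notMem_negSquares {ζ : ZMod p} (hζ : ¬ ∃ t : ZMod p, t ^ 2 = -ζ) :
    0 ∉ negSquares ζ := by
  rintro ⟨r, hr, h₀, h₁⟩
  have h := eq_or_eq_neg_of_square_eq hζ (r := 0) (s := r)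
    (by simpa using h₀.symm) (by simpa using h₁.symm)
  exact hr (by simpa using h)

theorem measure_evenValuationSquares (hodd : p ≠ 2) {ζ : ZMod p}
    (hζ : ¬ ∃ t : ZMod p, t ^ 2 = -ζ) :
    2 * ((p : ℝ) ^ 2 + 1) * ρ.real (evenValuationSquares ζ) =
      ρ.real {x | PadicInt.residuePair p x = 0} := by
  have hdisj : Disjoint (PadicInt.residuePair p ⁻¹' negSquares ζ) (evenValuationSquares ζ) := by
    refine Set.disjoint_left.mpr fun x hx hx' => zero_notMem_negSquares hζ ?_
    rw [← show PadicInt.residuePair p x = 0 from evenValuationSquares_subset ζ hx']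
    exact hx
  have h : (p : ENNReal) ^ 2 * ((p : ENNReal) ^ 2 * ρ (evenValuationSquares ζ)) =
      (negSquares ζ).ncard * ρ {x | PadicInt.residuePair p x = 0} +
        ρ (evenValuationSquares ζ) := by
    conv_lhs => rw [evenValuationSquares_eq_image ζ]
    rw [PadicInt.measure_p_smul_image, PadicInt.measure_p_smul_image,
      measure_union hdisj (isOpen_evenValuationSquares ζ).measurableSet,
      PadicInt.measure_residuePair_preimage]
  have h' := congrArg ENNReal.toReal h
  rw [ENNReal.toReal_add (by finiteness) (by finiteness)] at h'
  simp only [ENNReal.toReal_mul, ENNReal.toReal_pow, ENNReal.toReal_natCast,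
    ← measureReal_def] at h'
  have hcard : 2 * ((negSquares ζ).ncard : ℝ) + 1 = (p : ℝ) ^ 2 := by
    exact_mod_cast two_mul_ncard_negSquares_add_one hodd hζ
  have hp : (1 : ℝ) < p := by exact_mod_cast (Fact.out : p.Prime).one_lt
  have hp2 : (p : ℝ) ^ 2 - 1 ≠ 0 := by nlinarith
  refine mul_left_cancel₀ hp2 ?_
  linear_combination 2 * h' + ρ.real {x | PadicInt.residuePair p x = 0} * hcard

theorem measure_singleton_zero : ρ {(0 : ℤ_[p] × ℤ_[p])} = 0 := by
  have h := congrArg ENNReal.toReal (PadicInt.measure_p_smul_image ρ {0})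
  rw [Set.image_singleton, smul_zero] at h
  simp only [ENNReal.toReal_mul, ENNReal.toReal_pow, ENNReal.toReal_natCast] at h
  have hp : (1 : ℝ) < p := by exact_mod_cast (Fact.out : p.Prime).one_lt
  have hp2 : (p : ℝ) ^ 2 - 1 ≠ 0 := by nlinarith
  have h0 : (ρ {(0 : ℤ_[p] × ℤ_[p])}).toReal = 0 :=
    (mul_eq_zero.mp (by linear_combination h)).resolve_left hp2
  exact (ENNReal.toReal_eq_zero_iff _).mp h0 |>.resolve_right (measure_ne_top _ _)

theorem measure_residue_zero_diff (hodd : p ≠ 2) {ζ : ZMod p}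
    (hζ : ¬ ∃ t : ZMod p, t ^ 2 = -ζ) :
    ρ.real ({x | PadicInt.residuePair p x = 0} \ ({0} ∪ evenValuationSquares ζ)) =
      (2 * (p : ℝ) ^ 2 + 1) / (2 * ((p : ℝ) ^ 2 + 1)) *
        ρ.real {x | PadicInt.residuePair p x = 0} := by
  have hmeas : ρ.real ({0} ∪ evenValuationSquares ζ) = ρ.real (evenValuationSquares ζ) := by
    rw [measureReal_def, measureReal_def]
    congr 1
    refine le_antisymm ((measure_union_le _ _).trans ?_) (measure_mono Set.subset_union_right)
    rw [measure_singleton_zero, zero_add]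
  rw [measureReal_sdiff, hmeas, ← measure_evenValuationSquares ρ hodd hζ]
  · field_simp
    ring
  · exact Set.union_subset (by simp) (evenValuationSquares_subset ζ)
  · exact (measurableSet_singleton _).union (isOpen_evenValuationSquares ζ).measurableSet

end Measure

section Fibration

variable {p : ℕ} [Fact p.Prime]

/-- The coefficient space as pairs `((c₂, c₃), (c₀, c₁))`. -/
noncomputable def coeffPairs (p : ℕ) [Fact p.Prime] :
    (Fin 4 → ℤ_[p]) ≃ₜ+ (ℤ_[p] × ℤ_[p]) × (ℤ_[p] × ℤ_[p]) where
  toFun c := ((c 2, c 3), (c 0, c 1))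
  invFun y := ![y.2.1, y.2.2, y.1.1, y.1.2]
  left_inv c := by ext i; fin_cases i <;> rfl
  right_inv y := rfl
  map_add' _ _ := rfl
  continuous_toFun := by fun_prop
  continuous_invFun := by
    refine continuous_pi fun i => ?_
    fin_cases i <;> simp <;> fun_prop

/-- A set fibred over `D` whose fibres are translates of `B` has product measure. -/
theorem prod_measure_translate_fibres {G H : Type*} [MeasurableSpace G] [AddCommGroup H]
    [MeasurableSpace H] [MeasurableAdd₂ H] [MeasurableNeg H] (μ : Measure G) (ν : Measure H)
    [SFinite μ] [SFinite ν] [ν.IsAddLeftInvariant] {D : Set G} {B : Set H}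
    (hD : MeasurableSet D) (hB : MeasurableSet B) {h : G → H} (hh : Measurable h) :
    (μ.prod ν) {y | y.1 ∈ D ∧ y.2 - h y.1 ∈ B} = μ D * ν B := by
  have hmeas : MeasurableSet {y : G × H | y.1 ∈ D ∧ y.2 - h y.1 ∈ B} := by
    refine (measurable_fst hD).inter ?_
    have : Measurable fun y : G × H => y.2 - h y.1 := by
      simp only [sub_eq_add_neg]
      exact measurable_snd.add (hh.comp measurable_fst).neg
    exact this hB
  rw [Measure.prod_apply hmeas]
  have : ∀ a, ν (Prod.mk a ⁻¹' {y : G × H | y.1 ∈ D ∧ y.2 - h y.1 ∈ B}) =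
      D.indicator (fun _ => ν B) a := by
    intro a
    by_cases ha : a ∈ D
    · rw [Set.indicator_of_mem ha, ← measure_preimage_add_right ν (-h a) B]
      congr 1
      ext x
      simp [ha, sub_eq_add_neg]
    · rw [Set.indicator_of_notMem ha]
      convert measure_empty (μ := ν)
      ext x
      simp [ha]
  simp_rw [this]
  rw [lintegral_indicator hD, lintegral_const, Measure.restrict_apply_univ, mul_comm]

theorem exists_measure_preimage_coeffPairs (μ : Measure (Fin 4 → ℤ_[p])) [μ.IsAddHaarMeasure]
    (ρ : Measure (ℤ_[p] × ℤ_[p])) [ρ.IsAddHaarMeasure] :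
    ∃ κ : NNReal, κ ≠ 0 ∧ ∀ E, μ (coeffPairs p ⁻¹' E) = κ * (ρ.prod ρ) E := by
  have := (coeffPairs p).isAddHaarMeasure_map μ
  have : (ρ.prod ρ).IsAddHaarMeasure := Measure.prod.instIsAddHaarMeasure ρ ρ
  have hc := Measure.isAddLeftInvariant_eq_smul (μ.map (coeffPairs p)) (ρ.prod ρ)
  refine ⟨_, (Measure.addHaarScalarFactor_pos_of_isAddHaarMeasure
    (μ.map (coeffPairs p)) (ρ.prod ρ)).ne', fun E => ?_⟩
  have hmap : μ.map (coeffPairs p) E = μ (coeffPairs p ⁻¹' E) :=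
    (coeffPairs p).toHomeomorph.measurableEmbedding.map_apply μ E
  rw [← hmap]
  conv_lhs => rw [hc]
  rw [Measure.smul_apply, ENNReal.smul_def, smul_eq_mul]

end Fibration

/-- Lemma 5 (double quadratics): for odd `p` and `-ζ` a non-square mod `p`, the
proportion of monic quartics `f ≡ (x² + ζ)² (mod p)` that are irreducible in `ℤ_p[x]`
is `(2p² + 1)/(2(p² + 1))`. -/
theorem stmt_14 (p : ℕ) [Fact p.Prime] (hodd : p ≠ 2) (ζ : ℤ_[p])
    (hζ : ¬ ∃ t : ZMod p, t ^ 2 = -(PadicInt.toZMod ζ))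
    (μ : Measure (Fin 4 → ℤ_[p])) [μ.IsAddHaarMeasure] :
    (μ {c : Fin 4 → ℤ_[p] |
        (X ^ 4 + ∑ i : Fin 4, C (c i) * X ^ (i : ℕ)).map PadicInt.toZMod =
          (X ^ 2 + C (PadicInt.toZMod ζ)) ^ 2 ∧
        Irreducible (X ^ 4 + ∑ i : Fin 4, C (c i) * X ^ (i : ℕ))}).toReal /
      (μ {c : Fin 4 → ℤ_[p] |
        (X ^ 4 + ∑ i : Fin 4, C (c i) * X ^ (i : ℕ)).map PadicInt.toZMod =
          (X ^ 2 + C (PadicInt.toZMod ζ)) ^ 2}).toReal =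
      (2 * (p : ℝ) ^ 2 + 1) / (2 * ((p : ℝ) ^ 2 + 1)) := by
  obtain ⟨η, hη⟩ := (PadicInt.isUnit_two (p := p) hodd).exists_right_inv
  have h2 := ZMod.two_ne_zero_of_odd hodd
  set z := PadicInt.toZMod ζ
  let σ : ℤ_[p] × ℤ_[p] → ℤ_[p] := fun a => η * a.2
  let τ : ℤ_[p] × ℤ_[p] → ℤ_[p] := fun a => η * (a.1 - σ a ^ 2)
  let h : ℤ_[p] × ℤ_[p] → ℤ_[p] × ℤ_[p] := fun a => (τ a ^ 2, 2 * σ a * τ a)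
  have hh : Measurable h := by
    have : Continuous h := by fun_prop
    exact this.measurable
  let D : Set (ℤ_[p] × ℤ_[p]) := PadicInt.residuePair p ⁻¹' {(2 * z, 0)}
  let H : Set (ℤ_[p] × ℤ_[p]) := {x | PadicInt.residuePair p x = 0}
  let S : Set (ℤ_[p] × ℤ_[p]) := {0} ∪ evenValuationSquares z
  have hDo : IsOpen D := PadicInt.isOpen_residuePair_preimage _
  have hHo : IsOpen H := PadicInt.isOpen_residuePair_eq_zero
  have hSm : MeasurableSet S :=
    (measurableSet_singleton _).union (isOpen_evenValuationSquares z).measurableSet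
  have hclass : ∀ c : Fin 4 → ℤ_[p],
      (X ^ 4 + ∑ i : Fin 4, C (c i) * X ^ (i : ℕ)).map PadicInt.toZMod = (X ^ 2 + C z) ^ 2 ↔
        (c 2, c 3) ∈ D ∧ (c 0, c 1) - h (c 2, c 3) ∈ H := by
    intro c
    rw [quartic_map_eq_iff]
    simp only [D, H, Set.mem_preimage, Set.mem_singleton_iff, Set.mem_ofPred_eq,
      PadicInt.residuePair_apply, Prod.mk.injEq, Prod.mk_eq_zero, Prod.fst_sub, Prod.snd_sub, h,
      map_sub, map_mul, map_pow, PadicInt.toZMod_two, sub_eq_zero]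
    have key : PadicInt.toZMod (c 3) = 0 → PadicInt.toZMod (c 2) = 2 * z →
        PadicInt.toZMod (σ (c 2, c 3)) = 0 ∧ PadicInt.toZMod (τ (c 2, c 3)) = z := by
      intro h3 h2c
      have hη' := congrArg PadicInt.toZMod hη
      rw [map_mul, PadicInt.toZMod_two, map_one] at hη'
      have hσ : PadicInt.toZMod (σ (c 2, c 3)) = 0 := by simp [σ, h3]
      refine ⟨hσ, ?_⟩
      simp only [τ, map_mul, map_sub, map_pow, hσ, h2c]
      linear_combination z * hη'
    constructor
    · rintro ⟨h3, h2c, h1, h0⟩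
      obtain ⟨hσ, hτ⟩ := key h3 h2c
      simp [h3, h2c, h1, h0, hσ, hτ]
    · rintro ⟨⟨h2c, h3⟩, h0, h1⟩
      obtain ⟨hσ, hτ⟩ := key h3 h2c
      rw [hτ] at h0
      rw [hσ, mul_zero, zero_mul] at h1
      exact ⟨h3, h2c, h1, h0⟩
  have hden : {c : Fin 4 → ℤ_[p] |
      (X ^ 4 + ∑ i : Fin 4, C (c i) * X ^ (i : ℕ)).map PadicInt.toZMod = (X ^ 2 + C z) ^ 2} =
      coeffPairs p ⁻¹' {y | y.1 ∈ D ∧ y.2 - h y.1 ∈ H} :=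
    Set.ext hclass
  have hnum : {c : Fin 4 → ℤ_[p] |
      (X ^ 4 + ∑ i : Fin 4, C (c i) * X ^ (i : ℕ)).map PadicInt.toZMod = (X ^ 2 + C z) ^ 2 ∧
        Irreducible (X ^ 4 + ∑ i : Fin 4, C (c i) * X ^ (i : ℕ))} =
      coeffPairs p ⁻¹' {y | y.1 ∈ D ∧ y.2 - h y.1 ∈ H \ S} := by
    ext c
    have hirr := quartic_not_irreducible_iff_mem hodd hζ (c := c)
      (s := σ (c 2, c 3)) (t := τ (c 2, c 3))
      (by simp only [σ]; linear_combination -c 3 * hη)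
      (by simp only [τ]; linear_combination -(c 2 - σ (c 2, c 3) ^ 2) * hη)
    constructor
    · rintro ⟨hc, hi⟩
      obtain ⟨hD, hH⟩ := (hclass c).mp hc
      exact ⟨hD, hH, fun hS => (hirr hc).mpr hS hi⟩
    · rintro ⟨hD, hH, hS⟩
      have hc := (hclass c).mpr ⟨hD, hH⟩
      exact ⟨hc, not_not.mp fun hi => hS ((hirr hc).mp hi)⟩
  let ρ : Measure (ℤ_[p] × ℤ_[p]) := Measure.addHaar
  obtain ⟨κ, hκ, hμ⟩ := exists_measure_preimage_coeffPairs μ ρ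
  rw [hden, hnum, hμ, hμ, prod_measure_translate_fibres ρ ρ hDo.measurableSet
    hHo.measurableSet hh, prod_measure_translate_fibres ρ ρ hDo.measurableSet
    (hHo.measurableSet.diff hSm) hh]
  simp only [ENNReal.toReal_mul, ENNReal.coe_toReal, ← measureReal_def]
  have hDne : ρ.real D ≠ 0 := by
    obtain ⟨a, ha⟩ := PadicInt.residuePair_surjective (2 * z, 0)
    exact ENNReal.toReal_ne_zero.mpr ⟨hDo.measure_ne_zero ρ ⟨a, ha⟩, measure_ne_top _ _⟩
  have hHne : ρ.real H ≠ 0 :=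
    ENNReal.toReal_ne_zero.mpr ⟨hHo.measure_ne_zero ρ ⟨0, map_zero _⟩, measure_ne_top _ _⟩
  have hκ' : (κ : ℝ) ≠ 0 := by exact_mod_cast hκ
  rw [measure_residue_zero_diff ρ hodd hζ]
  change _ / (_ * (_ * ρ.real H)) = _
  change (_ * (_ * (_ * ρ.real H))) / _ = _
  field_simp
end
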